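/- arXiv:1412.6641 — 7 statements merged into one kernel-verified Lean document; each statement's English description precedes it below -/
import Mathlib

section
/- Consider a generalized SV source with finite alphabet 𝒞, finite index set 𝒮, and probability distributions p_s on 𝒞 for s ∈ 𝒮. Suppose there exists a function ψ : 𝒞 → ℝ such that for every s ∈ 𝒮, the expectation of ψ under p_s is zero and the variance of ψ under p_s is strictly positive. Then deterministic randomness extraction from this generalized SV source is possible: for every ε > 0 there exist n and a function Γ : 𝒞^n → {0,1} such that for every adversary strategy, |P[Γ(C_1,…,C_n) = 0] − 1/2| ≤ ε. -/
/-!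
Under every strategy the partial sums of `ψ(c₁), ψ(c₂), …` form a martingale, whose increments are
bounded by some `B` and have conditional variance at least some `σ2 > 0`. Freeze this walk as soon
as it leaves `(-L, L)` and let the extractor output `false` exactly when the final position `x` is
at least `L`; always `|x| ≤ L + B`.

* Since `E x = 0` and `1[x ≥ L] ≤ (x + L + B) / (2L + B)`, the probability of `false` is at most
  `(L + B) / (2L + B)`.
* Since `1[x ≥ L] ≥ (x + L) / (2L + B) - 1[|x| < L]`, it is at least
  `L / (2L + B) - P(|x| < L)`.
* `x_k² - k σ2 1[|x_k| < L]` is a submartingale started at `0`, so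
  `n σ2 P(|x_n| < L) ≤ E x_n² ≤ (L + B)²`.

Both bounds tend to `1 / 2` when first `L` and then `n` is taken large. The (sub)martingale
inequalities are all instances of `potential_le`, which is proved by induction on the length,
splitting off the last symbol.
-/

open Finset

/-- `p` is a probability distribution on a finite set. -/
def IsDist {α : Type*} [Fintype α] (p : α → ℝ) : Prop :=
  (∀ a, 0 ≤ p a) ∧ ∑ a, p a = 1

/-- The history (first `i` symbols) of a sequence `c` of length `n`. -/
def histOf {C : Type*} {n : ℕ} (c : Fin n → C) (i : Fin n) : Fin i.1 → C :=
  fun j => c ⟨j.1, j.2.trans i.2⟩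

/-- An adversary strategy of length `n`: for each time `i` and each history, a
probability distribution on the set of dice `S`. -/
def IsStrategy {C S : Type*} [Fintype S] {n : ℕ}
    (q : (i : Fin n) → (Fin i.1 → C) → S → ℝ) : Prop :=
  ∀ i h, IsDist (q i h)

/-- The probability of the sequence `c` under the generalized SV source with dice
`p` and adversary strategy `q`. -/
def seqProb {C S : Type*} [Fintype C] [Fintype S] (p : S → C → ℝ) {n : ℕ}
    (q : (i : Fin n) → (Fin i.1 → C) → S → ℝ) (c : Fin n → C) : ℝ :=
  ∏ i, ∑ s, q i (histOf c i) s * p s (c i)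

/-- One step of the walk with increments `ψ`, frozen outside `(-L, L)`. -/
noncomputable def walkStep {C : Type} (ψ : C → ℝ) (L x : ℝ) (a : C) : ℝ :=
  if |x| < L then x + ψ a else x

/-- Position, after reading the whole word `c`, of the frozen walk started at `0`. -/
noncomputable def walk {C : Type} (ψ : C → ℝ) (L : ℝ) : (n : ℕ) → (Fin n → C) → ℝ
  | 0, _ => 0
  | n + 1, c => walkStep ψ L (walk ψ L n (Fin.init c)) (c (Fin.last n))

theorem abs_walk_le {C : Type} (ψ : C → ℝ) {L B : ℝ} (hL : 0 ≤ L) (hB : ∀ a, |ψ a| ≤ B)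
    (hB0 : 0 ≤ B) (n : ℕ) (c : Fin n → C) : |walk ψ L n c| ≤ L + B := by
  induction n with
  | zero => simp [walk]; linarith
  | succ n ih =>
    rw [walk, walkStep]
    split_ifs with h
    · exact (abs_add_le _ _).trans (add_le_add h.le (hB _))
    · exact ih _

theorem seqProb_nonneg {C S : Type} [Fintype C] [Fintype S] {p : S → C → ℝ}
    (hp : ∀ s, IsDist (p s)) {n : ℕ} {q : (i : Fin n) → (Fin i.1 → C) → S → ℝ}
    (hq : IsStrategy q) (c : Fin n → C) : 0 ≤ seqProb p q c :=
  Finset.prod_nonneg fun i _ => Finset.sum_nonneg fun s _ =>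
    mul_nonneg ((hq i _).1 s) ((hp s).1 _)

theorem seqProb_snoc {C S : Type} [Fintype C] [Fintype S] (p : S → C → ℝ) {n : ℕ}
    (q : (i : Fin (n + 1)) → (Fin i.1 → C) → S → ℝ) (c : Fin n → C) (a : C) :
    seqProb p q (Fin.snoc c a : Fin (n + 1) → C) =
      seqProb p (fun i : Fin n => q i.castSucc) c * ∑ s, q (Fin.last n) c s * p s a := by
  have h1 : ∀ i : Fin n, histOf (Fin.snoc c a : Fin (n + 1) → C) i.castSucc = histOf c i := by
    intro i
    funext j
    exact Fin.snoc_castSucc (α := fun _ => C) a c ⟨j.1, j.2.trans i.2⟩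
  have h2 : histOf (Fin.snoc c a : Fin (n + 1) → C) (Fin.last n) = c := by
    funext j
    exact Fin.snoc_castSucc (α := fun _ => C) a c j
  unfold seqProb
  rw [Fin.prod_univ_castSucc]
  congr 1
  · refine Finset.prod_congr rfl fun i _ => ?_
    rw [h1, Fin.snoc_castSucc]
  · rw [h2, Fin.snoc_last]

/-- A time-dependent potential `V` that does not decrease in mean under any single `p s`, along the
walk, does not decrease in mean under any strategy. -/
theorem potential_le {C S : Type} [Fintype C] [Fintype S] {p : S → C → ℝ}
    (hp : ∀ s, IsDist (p s)) (ψ : C → ℝ) (L : ℝ) (V : ℕ → ℝ → ℝ)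
    (hV : ∀ k x s, V k x ≤ ∑ a, p s a * V (k + 1) (walkStep ψ L x a))
    (n : ℕ) (q : (i : Fin n) → (Fin i.1 → C) → S → ℝ) (hq : IsStrategy q) :
    V 0 0 ≤ ∑ c, seqProb p q c * V n (walk ψ L n c) := by
  induction n with
  | zero => simp [walk, seqProb]
  | succ n ih =>
    have hq' : IsStrategy (fun i : Fin n => q i.castSucc) := fun i h => hq i.castSucc h
    refine (ih _ hq').trans ?_
    rw [← (Fin.snocEquiv fun _ : Fin (n + 1) => C).sum_comp, Fintype.sum_prod_type_right]
    refine Finset.sum_le_sum fun c _ => ?_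
    have key : V n (walk ψ L n c) ≤ ∑ a, (∑ s, q (Fin.last n) c s * p s a) *
        V (n + 1) (walkStep ψ L (walk ψ L n c) a) := by
      calc V n (walk ψ L n c) = ∑ s, q (Fin.last n) c s * V n (walk ψ L n c) := by
            rw [← Finset.sum_mul, (hq (Fin.last n) c).2, one_mul]
        _ ≤ ∑ s, q (Fin.last n) c s *
              ∑ a, p s a * V (n + 1) (walkStep ψ L (walk ψ L n c) a) :=
            Finset.sum_le_sum fun s _ =>
              mul_le_mul_of_nonneg_left (hV _ _ _) ((hq (Fin.last n) c).1 s)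
        _ = _ := by
            simp_rw [Finset.mul_sum, Finset.sum_mul]
            rw [Finset.sum_comm]
            simp_rw [mul_assoc]
    refine (mul_le_mul_of_nonneg_left key (seqProb_nonneg hp hq' c)).trans_eq ?_
    rw [Finset.mul_sum]
    refine Finset.sum_congr rfl fun a _ => ?_
    have e : (Fin.snocEquiv fun _ : Fin (n + 1) => C) (a, c) = (Fin.snoc c a : Fin (n + 1) → C) :=
      rfl
    rw [e, seqProb_snoc, walk, Fin.init_snoc, Fin.snoc_last, mul_assoc]

/-- The frozen walk is a martingale, so an affine function of it has mean equal to its value `v` at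
the start. The inequality `v ≤ …` suffices, as the signs of `u` and `v` are free. -/
theorem expect_affine {C S : Type} [Fintype C] [Fintype S] {p : S → C → ℝ}
    (hp : ∀ s, IsDist (p s)) {ψ : C → ℝ} (h0 : ∀ s, ∑ a, p s a * ψ a = 0) (L u v : ℝ)
    (n : ℕ) (q : (i : Fin n) → (Fin i.1 → C) → S → ℝ) (hq : IsStrategy q) :
    v ≤ ∑ c, seqProb p q c * (u * walk ψ L n c + v) := by
  have := potential_le hp ψ L (fun _ x => u * x + v) ?_ n q hq
  · simpa using this
  intro k x s
  have h1 := (hp s).2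
  unfold walkStep
  split_ifs
  · have : ∀ a, p s a * (u * (x + ψ a) + v) = p s a * (u * x + v) + u * (p s a * ψ a) :=
      fun a => by ring
    simp only [this, Finset.sum_add_distrib, ← Finset.mul_sum, ← Finset.sum_mul, h1, h0]
    linarith
  · simp [← Finset.sum_mul, h1]

/-- The submartingale `x_k² - k σ2 1[|x_k| < L]`, giving a bound on the probability that the walk is
still inside `(-L, L)` at time `n`. -/
theorem expect_sq {C S : Type} [Fintype C] [Fintype S] {p : S → C → ℝ}
    (hp : ∀ s, IsDist (p s)) {ψ : C → ℝ} (h0 : ∀ s, ∑ a, p s a * ψ a = 0) {σ2 : ℝ}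
    (hσ0 : 0 ≤ σ2) (hσ : ∀ s, σ2 ≤ ∑ a, p s a * ψ a ^ 2) (L : ℝ)
    (n : ℕ) (q : (i : Fin n) → (Fin i.1 → C) → S → ℝ) (hq : IsStrategy q) :
    0 ≤ ∑ c, seqProb p q c *
      (walk ψ L n c ^ 2 - n * σ2 * (if |walk ψ L n c| < L then 1 else 0)) := by
  have := potential_le hp ψ L
    (fun k x => x ^ 2 - k * σ2 * (if |x| < L then 1 else 0)) ?_ n q hq
  · simpa using this
  intro k x s
  have h1 := (hp s).2
  unfold walkStep
  by_cases h : |x| < L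
  · simp only [h, if_true]
    have hle : ∀ a, p s a * (x ^ 2 - (k + 1) * σ2) + 2 * x * (p s a * ψ a) + p s a * ψ a ^ 2 ≤
        p s a * ((x + ψ a) ^ 2 -
          ((k + 1 : ℕ) : ℝ) * σ2 * (if |x + ψ a| < L then 1 else 0)) := by
      intro a
      have hk : 0 ≤ ((k : ℝ) + 1) * σ2 := by positivity
      have : (x ^ 2 - (k + 1) * σ2) + 2 * x * ψ a + ψ a ^ 2 ≤ (x + ψ a) ^ 2 -
          ((k + 1 : ℕ) : ℝ) * σ2 * (if |x + ψ a| < L then 1 else 0) := by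
        push_cast
        split_ifs <;> nlinarith
      have := mul_le_mul_of_nonneg_left this ((hp s).1 a)
      linarith
    refine le_trans ?_ (Finset.sum_le_sum fun a _ => hle a)
    simp only [Finset.sum_add_distrib, ← Finset.mul_sum, ← Finset.sum_mul, h1, h0]
    linarith [hσ s]
  · simp [h, ← Finset.sum_mul, h1]

/-- If there is a function `ψ : 𝒞 → ℝ` whose expectation under every
`p_s` is zero and whose variance under every `p_s` is positive, then deterministic
randomness extraction from the generalized SV source is possible. -/
theorem stmt_0 {C S : Type} [Fintype C] [DecidableEq C] [Fintype S] (p : S → C → ℝ)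
    (hp : ∀ s, IsDist (p s))
    (hψ : ∃ ψ : C → ℝ, ∀ s : S,
      (∑ c, p s c * ψ c) = 0 ∧
      0 < (∑ c, p s c * ψ c ^ 2) - (∑ c, p s c * ψ c) ^ 2) :
    ∀ ε : ℝ, 0 < ε → ∃ (n : ℕ) (Γ : (Fin n → C) → Bool),
      ∀ q : (i : Fin n) → (Fin i.1 → C) → S → ℝ, IsStrategy q →
        |(∑ c ∈ univ.filter (fun c => Γ c = false), seqProb p q c) - 1 / 2| ≤ ε := by
  intro ε hε
  obtain ⟨ψ, hψ⟩ := hψ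
  have h0 : ∀ s, ∑ a, p s a * ψ a = 0 := fun s => (hψ s).1
  have hpos : ∀ s, 0 < ∑ a, p s a * ψ a ^ 2 := fun s => by
    have := (hψ s).2
    rw [h0 s] at this
    linarith
  rcases isEmpty_or_nonempty S with hS | hS
  · -- With no dice there is no strategy of positive length.
    refine ⟨1, fun _ => false, fun q hq => ?_⟩
    have := (hq 0 Fin.elim0).2
    simp at this
  obtain ⟨s₀, hs₀⟩ := Finite.exists_min fun s => ∑ a, p s a * ψ a ^ 2
  obtain ⟨σ2, hσ2⟩ : ∃ σ2, σ2 = ∑ a, p s₀ a * ψ a ^ 2 := ⟨_, rfl⟩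
  have hσpos : 0 < σ2 := hσ2 ▸ hpos s₀
  have hσ : ∀ s, σ2 ≤ ∑ a, p s a * ψ a ^ 2 := fun s => hσ2 ▸ hs₀ s
  obtain ⟨B, hB0, hB⟩ : ∃ B : ℝ, 0 < B ∧ ∀ a, |ψ a| ≤ B := by
    refine ⟨1 + ∑ a, |ψ a|, by positivity, fun a => ?_⟩
    have := Finset.single_le_sum (f := fun a => |ψ a|) (fun a _ => abs_nonneg _)
      (Finset.mem_univ a)
    linarith
  -- The overshoot costs `B / (2 (2L + B)) ≤ ε / 2`.
  obtain ⟨L, hL⟩ : ∃ L, L = B / ε := ⟨_, rfl⟩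
  have hLpos : 0 < L := hL ▸ div_pos hB0 hε
  have hLε : L * ε = B := by rw [hL]; field_simp
  -- Not having left `(-L, L)` by time `n` has probability at most `ε / 2`.
  obtain ⟨n, hn⟩ := exists_nat_gt ((L + B) ^ 2 / (σ2 * (ε / 2)))
  have hnε : (L + B) ^ 2 < n * σ2 * (ε / 2) := by
    rw [div_lt_iff₀ (by positivity)] at hn
    linarith
  have hnpos : 0 < n * σ2 := by
    by_contra! h
    nlinarith [sq_nonneg (L + B)]
  refine ⟨n, fun c => !decide (L ≤ walk ψ L n c), fun q hq => ?_⟩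
  have hw : ∀ c, |walk ψ L n c| ≤ L + B := abs_walk_le ψ hLpos.le hB hB0.le n
  have hP : ∀ c, 0 ≤ seqProb p q c := seqProb_nonneg hp hq
  rw [Finset.sum_filter]
  have hD : 0 < 2 * L + B := by linarith
  have upper : (∑ c, if (!decide (L ≤ walk ψ L n c)) = false then seqProb p q c else 0) ≤
      (L + B) / (2 * L + B) := by
    have h := expect_affine hp h0 L (-1 / (2 * L + B)) (-((L + B) / (2 * L + B))) n q hq
    rw [← neg_le_neg_iff, ← Finset.sum_neg_distrib]
    refine h.trans (Finset.sum_le_sum fun c _ => ?_)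
    obtain ⟨hl, hr⟩ := abs_le.1 (hw c)
    have e : -1 / (2 * L + B) * walk ψ L n c + -((L + B) / (2 * L + B)) =
      -((walk ψ L n c + L + B) / (2 * L + B)) := by ring
    rw [e]
    by_cases hc : L ≤ walk ψ L n c
    · have : 1 ≤ (walk ψ L n c + L + B) / (2 * L + B) := by
        rw [le_div_iff₀ hD]; linarith
      simp only [hc, decide_true, Bool.not_true, if_true]
      nlinarith [hP c]
    · have : 0 ≤ (walk ψ L n c + L + B) / (2 * L + B) := div_nonneg (by linarith) hD.le
      simp only [hc, decide_false, Bool.not_false, Bool.true_eq_false, if_false]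
      nlinarith [hP c, mul_nonneg (hP c) this]
  have lower : L / (2 * L + B) - (L + B) ^ 2 / (n * σ2) ≤
      ∑ c, if (!decide (L ≤ walk ψ L n c)) = false then seqProb p q c else 0 := by
    have h1 := expect_affine hp h0 L (1 / (2 * L + B))
      (L / (2 * L + B) - (L + B) ^ 2 / (n * σ2)) n q hq
    have h2 := mul_nonneg (one_div_pos.2 hnpos).le (expect_sq hp h0 hσpos.le hσ L n q hq)
    rw [Finset.mul_sum] at h2
    refine (le_add_of_le_of_nonneg h1 h2).trans ?_
    rw [← Finset.sum_add_distrib]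
    refine Finset.sum_le_sum fun c _ => ?_
    obtain ⟨hl, hr⟩ := abs_le.1 (hw c)
    have e : seqProb p q c * (1 / (2 * L + B) * walk ψ L n c +
          (L / (2 * L + B) - (L + B) ^ 2 / (n * σ2))) +
        1 / (n * σ2) * (seqProb p q c *
          (walk ψ L n c ^ 2 - n * σ2 * (if |walk ψ L n c| < L then 1 else 0))) =
        seqProb p q c * ((walk ψ L n c + L) / (2 * L + B)
          - ((L + B) ^ 2 - walk ψ L n c ^ 2) / (n * σ2)
          - (if |walk ψ L n c| < L then 1 else 0)) := by
      generalize (if |walk ψ L n c| < L then (1 : ℝ) else 0) = t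
      generalize hN : (n : ℝ) * σ2 = N at hnpos ⊢
      field_simp
      ring
    rw [e]
    have hsq : 0 ≤ ((L + B) ^ 2 - walk ψ L n c ^ 2) / (n * σ2) :=
      div_nonneg (by nlinarith) hnpos.le
    have h1 : (walk ψ L n c + L) / (2 * L + B) ≤ 1 := by
      rw [div_le_one hD]; linarith
    by_cases hc : L ≤ walk ψ L n c
    · simp only [hc, decide_true, Bool.not_true, if_true]
      have : (0 : ℝ) ≤ if |walk ψ L n c| < L then 1 else 0 := by split_ifs <;> norm_num
      exact mul_le_of_le_one_right (hP c) (by linarith)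
    · simp only [hc, decide_false, Bool.not_false, Bool.true_eq_false, if_false]
      refine mul_nonpos_of_nonneg_of_nonpos (hP c) ?_
      split_ifs with hi
      · linarith
      · have hx : walk ψ L n c + L ≤ 0 := by
          by_contra! hx
          exact hi (abs_lt.2 ⟨by linarith, not_le.1 hc⟩)
        have := div_nonpos_of_nonpos_of_nonneg hx hD.le
        linarith
  have hN : (L + B) ^ 2 / (n * σ2) ≤ ε / 2 := by
    rw [div_le_iff₀ hnpos]; linarith
  have hup : (L + B) / (2 * L + B) ≤ 1 / 2 + ε / 2 := by
    rw [div_le_iff₀ hD]; nlinarith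
  have hlo : 1 / 2 - ε / 2 ≤ L / (2 * L + B) := by
    rw [le_div_iff₀ hD]; nlinarith
  rw [abs_le]
  constructor <;> linarith
end

section
/- Let (A,B) be a pair of random variables on finite sets 𝒜 × ℬ with joint distribution p. A common random bit can be extracted from i.i.d. copies of (A,B) — i.e., for every ε > 0 there exist n and functions Γ : 𝒜^n → {0,1}, Λ : ℬ^n → {0,1} such that, under the n-fold i.i.d. distribution p^n, Pr[Γ(A^n) ≠ Λ(B^n)] < ε and |Pr[Γ(A^n)=0] − 1/2| < ε and |Pr[Λ(B^n)=0] − 1/2| < ε — if and only if the maximal correlation ρ(A,B) equals 1. -/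
/-! The proof has two independent halves.

*Extraction forces `ρ = 1`.*  By Cauchy–Schwarz `ρ ≤ 1`.  If `ρ < 1`, put `r = max ρ 0 < 1`.
The definition of `ρ` gives `E[XY] ≤ E[X] E[Y] + (r/2) (Var X + Var Y)` for all `X(A)`, `Y(B)`
(`corr_bound_one`).  In this additive form the inequality tensorizes by conditioning on the first
coordinate and using the law of total variance (`corr_bound_iid`), so it holds for functions of
`Aⁿ` and `Bⁿ` with the same `r`.  For the indicators of `Γ = 0` and `Λ = 0` it says that
`Pr[Γ ≠ Λ] ≥ (1 - r) (Var X + Var Y)`, which is bounded away from zero when both bits are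
nearly fair.

*`ρ = 1` allows extraction.*  After setting `X`, `Y` to zero off the supports of the marginals, the
supremum runs over a compact set, so it is attained (`exists_perfect_pair`), and
`E[(X - Y)²] = 2 - 2ρ = 0` means `X(A) = Y(B)` almost surely.  The signs of `X` and `Y` are then
a common non-constant bit.  The atoms of `n` i.i.d. copies of that bit have mass tending to zero, so a
greedy choice (`exists_subset_near_half`) yields an event of probability close to `1/2`, which both
parties decide identically. -/

open Finset

/-- `p` is a joint probability distribution on a finite set `A × B`. -/
def JointIsDist {A B : Type*} [Fintype A] [Fintype B] (p : A → B → ℝ) : Prop :=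
  (∀ a b, 0 ≤ p a b) ∧ (∑ a, ∑ b, p a b) = 1

/-- The Hirschfeld–Gebelein–Rényi maximal correlation of a joint distribution
`p` on `A × B`: the supremum of `E[X(A) Y(B)]` over functions `X, Y` with zero mean
and unit second moment (`0` if no such functions exist, since `sSup ∅ = 0`). -/
noncomputable def maxCorr {A B : Type*} [Fintype A] [Fintype B] (p : A → B → ℝ) : ℝ :=
  sSup {r | ∃ (X : A → ℝ) (Y : B → ℝ),
    (∑ a, (∑ b, p a b) * X a) = 0 ∧ (∑ b, (∑ a, p a b) * Y b) = 0 ∧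
    (∑ a, (∑ b, p a b) * X a ^ 2) = 1 ∧ (∑ b, (∑ a, p a b) * Y b ^ 2) = 1 ∧
    r = ∑ a, ∑ b, p a b * X a * Y b}

/-! ### Expectation over i.i.d. copies -/

/-- Expectation of `f` under the `n`-fold i.i.d. distribution of `p`. -/
noncomputable def iidExp {A B : Type} [Fintype A] [Fintype B] (p : A → B → ℝ) (n : ℕ)
    (f : (Fin n → A × B) → ℝ) : ℝ :=
  ∑ w, (∏ i, p (w i).1 (w i).2) * f w

section IidExp

variable {A B : Type} [Fintype A] [Fintype B] (p : A → B → ℝ)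

lemma iidExp_succ (n : ℕ) (f : (Fin (n + 1) → A × B) → ℝ) :
    iidExp p (n + 1) f =
      ∑ z : A × B, p z.1 z.2 * iidExp p n (fun w => f (Fin.cons z w)) := by
  unfold iidExp
  rw [← (Fin.consEquiv (fun _ : Fin (n + 1) => A × B)).sum_comp, Fintype.sum_prod_type]
  refine sum_congr rfl fun z _ => ?_
  rw [mul_sum]
  refine sum_congr rfl fun w _ => ?_
  simp [Fin.consEquiv, Fin.prod_univ_succ, mul_assoc]

lemma sum_weight (hp : JointIsDist p) : ∑ z : A × B, p z.1 z.2 = 1 := by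
  rw [Fintype.sum_prod_type]; exact hp.2

lemma iidExp_one (hp : JointIsDist p) (n : ℕ) : iidExp p n (fun _ => 1) = 1 := by
  induction n with
  | zero => simp [iidExp]
  | succ n ih => rw [iidExp_succ]; simp [ih, sum_weight p hp]

lemma iidExp_filter [DecidableEq A] [DecidableEq B] (n : ℕ) (P : (Fin n → A × B) → Prop)
    [DecidablePred P] :
    ∑ w ∈ univ.filter P, ∏ i, p (w i).1 (w i).2 = iidExp p n (fun w => if P w then 1 else 0) := by
  simp [iidExp, sum_filter]

/-- If the additive correlation inequality with constant `r` holds for one copy, it holds for `n`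
copies with the same constant: condition on the first coordinate, apply the inequality to the
remaining ones, and then to the conditional expectations. -/
lemma corr_bound_iid (hp : JointIsDist p) (r : ℝ)
    (h1 : ∀ (X : A → ℝ) (Y : B → ℝ),
      ∑ z : A × B, p z.1 z.2 * (X z.1 * Y z.2) ≤
        (∑ z : A × B, p z.1 z.2 * X z.1) * (∑ z : A × B, p z.1 z.2 * Y z.2) +
        r / 2 * ((∑ z : A × B, p z.1 z.2 * X z.1 ^ 2 - (∑ z : A × B, p z.1 z.2 * X z.1) ^ 2) +
          (∑ z : A × B, p z.1 z.2 * Y z.2 ^ 2 - (∑ z : A × B, p z.1 z.2 * Y z.2) ^ 2)))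
    (n : ℕ) (X : (Fin n → A) → ℝ) (Y : (Fin n → B) → ℝ) :
    iidExp p n (fun w => X (fun i => (w i).1) * Y (fun i => (w i).2)) ≤
      iidExp p n (fun w => X (fun i => (w i).1)) * iidExp p n (fun w => Y (fun i => (w i).2)) +
      r / 2 * ((iidExp p n (fun w => X (fun i => (w i).1) ^ 2) -
          iidExp p n (fun w => X (fun i => (w i).1)) ^ 2) +
        (iidExp p n (fun w => Y (fun i => (w i).2) ^ 2) -
          iidExp p n (fun w => Y (fun i => (w i).2)) ^ 2)) := by
  induction n with
  | zero => simp [iidExp]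
  | succ n ih =>
    have cX : ∀ (z : A × B) (w : Fin n → A × B),
        (fun i => ((Fin.cons z w : Fin (n + 1) → A × B) i).1) =
          (Fin.cons z.1 (fun i => (w i).1) : Fin (n + 1) → A) := by
      intro z w; funext i; refine Fin.cases ?_ (fun j => ?_) i <;> simp
    have cY : ∀ (z : A × B) (w : Fin n → A × B),
        (fun i => ((Fin.cons z w : Fin (n + 1) → A × B) i).2) =
          (Fin.cons z.2 (fun i => (w i).2) : Fin (n + 1) → B) := by
      intro z w; funext i; refine Fin.cases ?_ (fun j => ?_) i <;> simp
    simp only [iidExp_succ, cX, cY]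
    set X1 : A → ℝ := fun a => iidExp p n (fun w => X (Fin.cons a fun i => (w i).1)) with hX1
    set Y1 : B → ℝ := fun b => iidExp p n (fun w => Y (Fin.cons b fun i => (w i).2)) with hY1
    set X2 : A → ℝ := fun a => iidExp p n (fun w => X (Fin.cons a fun i => (w i).1) ^ 2) with hX2
    set Y2 : B → ℝ := fun b => iidExp p n (fun w => Y (Fin.cons b fun i => (w i).2) ^ 2) with hY2
    have key : ∀ z : A × B, p z.1 z.2 * iidExp p n (fun w =>
        X (Fin.cons z.1 fun i => (w i).1) * Y (Fin.cons z.2 fun i => (w i).2)) ≤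
        p z.1 z.2 * (X1 z.1 * Y1 z.2) + r / 2 * ((p z.1 z.2 * X2 z.1 - p z.1 z.2 * X1 z.1 ^ 2) +
          (p z.1 z.2 * Y2 z.2 - p z.1 z.2 * Y1 z.2 ^ 2)) := by
      intro z
      have := mul_le_mul_of_nonneg_left
        (ih (fun u => X (Fin.cons z.1 u)) (fun u => Y (Fin.cons z.2 u))) (hp.1 z.1 z.2)
      refine this.trans (le_of_eq ?_)
      simp only [hX1, hX2, hY1, hY2]
      ring
    have hs := sum_le_sum fun z (_ : z ∈ (univ : Finset (A × B))) => key z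
    simp only [sum_add_distrib, ← mul_sum, sum_sub_distrib] at hs
    have h := h1 X1 Y1
    change _ ≤ (∑ z : A × B, p z.1 z.2 * X1 z.1) * (∑ z : A × B, p z.1 z.2 * Y1 z.2) +
      r / 2 * ((∑ z : A × B, p z.1 z.2 * X2 z.1 - (∑ z : A × B, p z.1 z.2 * X1 z.1) ^ 2) +
        (∑ z : A × B, p z.1 z.2 * Y2 z.2 - (∑ z : A × B, p z.1 z.2 * Y1 z.2) ^ 2))
    linarith

end IidExp

/-! ### Maximal correlation for one copy -/

section OneCopy

variable {A B : Type} [Fintype A] [Fintype B] (p : A → B → ℝ)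

lemma marg_left (f : A → ℝ) : ∑ a, (∑ b, p a b) * f a = ∑ z : A × B, p z.1 z.2 * f z.1 := by
  rw [Fintype.sum_prod_type]; simp [sum_mul]

lemma marg_right (f : B → ℝ) : ∑ b, (∑ a, p a b) * f b = ∑ z : A × B, p z.1 z.2 * f z.2 := by
  rw [Fintype.sum_prod_type_right]; simp [sum_mul]

lemma corr_joint (X : A → ℝ) (Y : B → ℝ) :
    ∑ a, ∑ b, p a b * X a * Y b = ∑ z : A × B, p z.1 z.2 * (X z.1 * Y z.2) := by
  rw [Fintype.sum_prod_type]; simp [mul_assoc]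

/-- The feasible correlations of the definition of `maxCorr`, with all expectations taken under the
joint distribution. -/
def corrSet (p : A → B → ℝ) : Set ℝ :=
  {r | ∃ (X : A → ℝ) (Y : B → ℝ),
    ∑ z : A × B, p z.1 z.2 * X z.1 = 0 ∧ ∑ z : A × B, p z.1 z.2 * Y z.2 = 0 ∧
    ∑ z : A × B, p z.1 z.2 * X z.1 ^ 2 = 1 ∧ ∑ z : A × B, p z.1 z.2 * Y z.2 ^ 2 = 1 ∧
    r = ∑ z : A × B, p z.1 z.2 * (X z.1 * Y z.2)}

lemma maxCorr_eq : maxCorr p = sSup (corrSet p) := by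
  unfold maxCorr corrSet
  congr 1
  ext r
  simp only [Set.mem_ofPred_eq, corr_joint]
  simp only [marg_left p, marg_right p]

lemma sum_sq_sub (X : A → ℝ) (Y : B → ℝ) :
    ∑ z : A × B, p z.1 z.2 * (X z.1 - Y z.2) ^ 2 =
      ∑ z : A × B, p z.1 z.2 * X z.1 ^ 2 + ∑ z : A × B, p z.1 z.2 * Y z.2 ^ 2 -
        2 * ∑ z : A × B, p z.1 z.2 * (X z.1 * Y z.2) := by
  rw [mul_sum, ← sum_add_distrib, ← sum_sub_distrib]
  exact sum_congr rfl fun z _ => by ring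

lemma corrSet_le_one (hp : JointIsDist p) : ∀ r ∈ corrSet p, r ≤ 1 := by
  rintro r ⟨X, Y, -, -, hX, hY, rfl⟩
  have h := sum_sq_sub p X Y
  have : 0 ≤ ∑ z : A × B, p z.1 z.2 * (X z.1 - Y z.2) ^ 2 :=
    sum_nonneg fun z _ => mul_nonneg (hp.1 _ _) (sq_nonneg _)
  linarith

lemma maxCorr_le_one (hp : JointIsDist p) : maxCorr p ≤ 1 := by
  rw [maxCorr_eq]; exact Real.sSup_le (corrSet_le_one p hp) zero_le_one

/-- The bound `Cov(X, Y) ≤ (r/2) (Var X + Var Y)` for mean-zero `X`, `Y`, where `r = max ρ 0`. -/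
lemma corr_bound_centered (hp : JointIsDist p) (X : A → ℝ) (Y : B → ℝ)
    (hX : ∑ z : A × B, p z.1 z.2 * X z.1 = 0) (hY : ∑ z : A × B, p z.1 z.2 * Y z.2 = 0) :
    ∑ z : A × B, p z.1 z.2 * (X z.1 * Y z.2) ≤ max (maxCorr p) 0 / 2 *
      (∑ z : A × B, p z.1 z.2 * X z.1 ^ 2 + ∑ z : A × B, p z.1 z.2 * Y z.2 ^ 2) := by
  have hr0 : 0 ≤ max (maxCorr p) 0 := le_max_right _ _
  have hrρ : maxCorr p ≤ max (maxCorr p) 0 := le_max_left _ _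
  generalize max (maxCorr p) 0 = r at *
  have hVX : 0 ≤ ∑ z : A × B, p z.1 z.2 * X z.1 ^ 2 :=
    sum_nonneg fun z _ => mul_nonneg (hp.1 _ _) (sq_nonneg _)
  have hVY : 0 ≤ ∑ z : A × B, p z.1 z.2 * Y z.2 ^ 2 :=
    sum_nonneg fun z _ => mul_nonneg (hp.1 _ _) (sq_nonneg _)
  have hnull : ∀ f : A × B → ℝ, ∑ z : A × B, p z.1 z.2 * f z ^ 2 = 0 →
      ∀ z, p z.1 z.2 = 0 ∨ f z = 0 := by
    intro f hf z
    have := (sum_eq_zero_iff_of_nonneg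
      (fun z _ => mul_nonneg (hp.1 z.1 z.2) (sq_nonneg (f z)))).1 hf z (mem_univ z)
    simpa using this
  rcases hVX.eq_or_lt with h0 | hXpos
  · have : ∑ z : A × B, p z.1 z.2 * (X z.1 * Y z.2) = 0 := sum_eq_zero fun z _ => by
      rcases hnull (fun z => X z.1) h0.symm z with h | h <;> simp [h]
    rw [this]; positivity
  rcases hVY.eq_or_lt with h0 | hYpos
  · have : ∑ z : A × B, p z.1 z.2 * (X z.1 * Y z.2) = 0 := sum_eq_zero fun z _ => by
      rcases hnull (fun z => Y z.2) h0.symm z with h | h <;> simp [h]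
    rw [this]; positivity
  set s := √(∑ z : A × B, p z.1 z.2 * X z.1 ^ 2) with hs
  set t := √(∑ z : A × B, p z.1 z.2 * Y z.2 ^ 2) with ht
  have hs0 : 0 < s := Real.sqrt_pos.2 hXpos
  have ht0 : 0 < t := Real.sqrt_pos.2 hYpos
  have hs2 : s ^ 2 = ∑ z : A × B, p z.1 z.2 * X z.1 ^ 2 := Real.sq_sqrt hVX
  have ht2 : t ^ 2 = ∑ z : A × B, p z.1 z.2 * Y z.2 ^ 2 := Real.sq_sqrt hVY
  have hmem : (∑ z : A × B, p z.1 z.2 * (X z.1 * Y z.2)) / (s * t) ∈ corrSet p := by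
    refine ⟨fun a => X a / s, fun b => Y b / t, ?_, ?_, ?_, ?_, ?_⟩
    · simp only [← mul_div_assoc, ← sum_div, hX, zero_div]
    · simp only [← mul_div_assoc, ← sum_div, hY, zero_div]
    · simp only [div_pow, ← mul_div_assoc, ← sum_div, ← hs2]
      exact div_self (by positivity)
    · simp only [div_pow, ← mul_div_assoc, ← sum_div, ← ht2]
      exact div_self (by positivity)
    · rw [sum_div]
      exact sum_congr rfl fun z _ => by rw [div_mul_div_comm, mul_div_assoc]
  have hle : (∑ z : A × B, p z.1 z.2 * (X z.1 * Y z.2)) / (s * t) ≤ r := by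
    refine le_trans ?_ hrρ
    rw [maxCorr_eq]
    exact le_csSup ⟨1, corrSet_le_one p hp⟩ hmem
  rw [div_le_iff₀ (by positivity)] at hle
  rw [← hs2, ← ht2]
  nlinarith [mul_nonneg hr0 (sq_nonneg (s - t))]

lemma corr_bound_one (hp : JointIsDist p) (X : A → ℝ) (Y : B → ℝ) :
    ∑ z : A × B, p z.1 z.2 * (X z.1 * Y z.2) ≤
      (∑ z : A × B, p z.1 z.2 * X z.1) * (∑ z : A × B, p z.1 z.2 * Y z.2) +
      max (maxCorr p) 0 / 2 *
        ((∑ z : A × B, p z.1 z.2 * X z.1 ^ 2 - (∑ z : A × B, p z.1 z.2 * X z.1) ^ 2) +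
        (∑ z : A × B, p z.1 z.2 * Y z.2 ^ 2 - (∑ z : A × B, p z.1 z.2 * Y z.2) ^ 2)) := by
  have hone := sum_weight p hp
  set mX := ∑ z : A × B, p z.1 z.2 * X z.1 with hmX
  set mY := ∑ z : A × B, p z.1 z.2 * Y z.2 with hmY
  have h := corr_bound_centered p hp (fun a => X a - mX) (fun b => Y b - mY)
    (by simp only [mul_sub, sum_sub_distrib, ← sum_mul, hone, ← hmX]; ring)
    (by simp only [mul_sub, sum_sub_distrib, ← sum_mul, hone, ← hmY]; ring)
  have e1 : ∑ z : A × B, p z.1 z.2 * ((X z.1 - mX) * (Y z.2 - mY)) =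
      ∑ z : A × B, p z.1 z.2 * (X z.1 * Y z.2) - mX * mY := by
    have : ∀ z : A × B, p z.1 z.2 * ((X z.1 - mX) * (Y z.2 - mY)) =
        p z.1 z.2 * (X z.1 * Y z.2) - p z.1 z.2 * X z.1 * mY - p z.1 z.2 * Y z.2 * mX +
          p z.1 z.2 * (mX * mY) := fun z => by ring
    simp only [this, sum_sub_distrib, sum_add_distrib, ← sum_mul, hone, ← hmX, ← hmY]
    ring
  have e2 : ∑ z : A × B, p z.1 z.2 * (X z.1 - mX) ^ 2 =
      ∑ z : A × B, p z.1 z.2 * X z.1 ^ 2 - mX ^ 2 := by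
    have : ∀ z : A × B, p z.1 z.2 * (X z.1 - mX) ^ 2 =
        p z.1 z.2 * X z.1 ^ 2 - p z.1 z.2 * X z.1 * (2 * mX) + p z.1 z.2 * mX ^ 2 :=
      fun z => by ring
    simp only [this, sum_sub_distrib, sum_add_distrib, ← sum_mul, hone, ← hmX]
    ring
  have e3 : ∑ z : A × B, p z.1 z.2 * (Y z.2 - mY) ^ 2 =
      ∑ z : A × B, p z.1 z.2 * Y z.2 ^ 2 - mY ^ 2 := by
    have : ∀ z : A × B, p z.1 z.2 * (Y z.2 - mY) ^ 2 =
        p z.1 z.2 * Y z.2 ^ 2 - p z.1 z.2 * Y z.2 * (2 * mY) + p z.1 z.2 * mY ^ 2 :=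
      fun z => by ring
    simp only [this, sum_sub_distrib, sum_add_distrib, ← sum_mul, hone, ← hmY]
    ring
  rw [e1, e2, e3] at h
  linarith

/-! ### Attainment of the supremum -/

/-- A unit second moment bounds each value of `X` by the inverse of its marginal probability. -/
lemma abs_le_inv_of_sq {ι : Type} [Fintype ι] (m X : ι → ℝ) (hm : ∀ i, 0 ≤ m i)
    (hm1 : ∑ i, m i = 1) (hX : ∑ i, m i * X i ^ 2 = 1) (i : ι) (hi : m i ≠ 0) :
    |X i| ≤ (m i)⁻¹ := by
  have hpos : 0 < m i := lt_of_le_of_ne (hm i) (Ne.symm hi)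
  have h1 : m i ≤ 1 := hm1 ▸ single_le_sum (fun j _ => hm j) (mem_univ i)
  have h2 : m i * X i ^ 2 ≤ 1 := hX ▸
    single_le_sum (f := fun j => m j * X j ^ 2)
      (fun j _ => mul_nonneg (hm j) (sq_nonneg _)) (mem_univ i)
  rw [inv_eq_one_div, le_div_iff₀ hpos]
  refine abs_le_of_sq_le_sq' ?_ zero_le_one |>.2
  rw [mul_pow, sq_abs]
  nlinarith

/-- If the maximal correlation is one, some non-constant `X(A)` agrees almost surely with some
`Y(B)`. -/
lemma exists_perfect_pair (hp : JointIsDist p) (h : maxCorr p = 1) :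
    ∃ (X : A → ℝ) (Y : B → ℝ), ∑ z : A × B, p z.1 z.2 * X z.1 = 0 ∧
      ∑ z : A × B, p z.1 z.2 * X z.1 ^ 2 = 1 ∧ ∀ a b, p a b ≠ 0 → X a = Y b := by
  let mA : A → ℝ := fun a => ∑ b, p a b
  let mB : B → ℝ := fun b => ∑ a, p a b
  have hmA : ∀ a, 0 ≤ mA a := fun a => sum_nonneg fun b _ => hp.1 a b
  have hmB : ∀ b, 0 ≤ mB b := fun b => sum_nonneg fun a _ => hp.1 a b
  have hmA1 : ∑ a, mA a = 1 := hp.2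
  have hmB1 : ∑ b, mB b = 1 := by rw [← hp.2]; exact sum_comm
  have hpA : ∀ a b, mA a = 0 → p a b = 0 := fun a b h0 =>
    (sum_eq_zero_iff_of_nonneg fun b _ => hp.1 a b).1 h0 b (mem_univ b)
  have hpB : ∀ a b, mB b = 0 → p a b = 0 := fun a b h0 =>
    (sum_eq_zero_iff_of_nonneg fun a _ => hp.1 a b).1 h0 a (mem_univ a)
  -- Where a marginal vanishes, `0⁻¹ = 0` makes the interval the single point `0`.
  let K : Set ((A → ℝ) × (B → ℝ)) :=
    ((Set.univ.pi fun a => Set.Icc (-(mA a)⁻¹) (mA a)⁻¹) ×ˢ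
      (Set.univ.pi fun b => Set.Icc (-(mB b)⁻¹) (mB b)⁻¹)) ∩
    {q | ∑ z : A × B, p z.1 z.2 * q.1 z.1 = 0 ∧ ∑ z : A × B, p z.1 z.2 * q.2 z.2 = 0 ∧
      ∑ z : A × B, p z.1 z.2 * q.1 z.1 ^ 2 = 1 ∧ ∑ z : A × B, p z.1 z.2 * q.2 z.2 ^ 2 = 1}
  have hK : IsCompact K := by
    refine IsCompact.inter_right ((isCompact_univ_pi fun a => isCompact_Icc).prod
      (isCompact_univ_pi fun b => isCompact_Icc)) ?_
    refine IsClosed.inter (isClosed_eq (by fun_prop) continuous_const) ?_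
    refine IsClosed.inter (isClosed_eq (by fun_prop) continuous_const) ?_
    exact IsClosed.inter (isClosed_eq (by fun_prop) continuous_const)
      (isClosed_eq (by fun_prop) continuous_const)
  have hred : ∀ r ∈ corrSet p, ∃ q ∈ K, r = ∑ z : A × B, p z.1 z.2 * (q.1 z.1 * q.2 z.2) := by
    classical
    rintro r ⟨X, Y, hX, hY, hX2, hY2, rfl⟩
    let X' : A → ℝ := fun a => if mA a = 0 then 0 else X a
    let Y' : B → ℝ := fun b => if mB b = 0 then 0 else Y b
    have eX : ∀ z : A × B, p z.1 z.2 ≠ 0 → X' z.1 = X z.1 := fun z hz =>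
      if_neg fun h0 => hz (hpA _ _ h0)
    have eY : ∀ z : A × B, p z.1 z.2 ≠ 0 → Y' z.2 = Y z.2 := fun z hz =>
      if_neg fun h0 => hz (hpB _ _ h0)
    have cg : ∀ f g : A × B → ℝ, (∀ z, p z.1 z.2 ≠ 0 → f z = g z) →
        ∑ z : A × B, p z.1 z.2 * f z = ∑ z : A × B, p z.1 z.2 * g z := by
      intro f g hfg
      refine sum_congr rfl fun z _ => ?_
      by_cases hz : p z.1 z.2 = 0
      · simp [hz]
      · rw [hfg z hz]
    refine ⟨(X', Y'), ⟨⟨?_, ?_⟩, ?_, ?_, ?_, ?_⟩, ?_⟩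
    · intro a _
      by_cases h0 : mA a = 0
      · simp [X', h0]
      · have := abs_le_inv_of_sq mA X hmA hmA1 (by rw [← hX2]; exact marg_left p (fun a => X a ^ 2))
          a h0
        simpa [X', h0] using abs_le.1 this
    · intro b _
      by_cases h0 : mB b = 0
      · simp [Y', h0]
      · have := abs_le_inv_of_sq mB Y hmB hmB1
          (by rw [← hY2]; exact marg_right p (fun b => Y b ^ 2)) b h0
        simpa [Y', h0] using abs_le.1 this
    · rw [← hX]; exact cg (fun z => X' z.1) _ eX
    · rw [← hY]; exact cg (fun z => Y' z.2) _ eY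
    · rw [← hX2]; exact cg (fun z => X' z.1 ^ 2) _ fun z hz => by rw [eX z hz]
    · rw [← hY2]; exact cg (fun z => Y' z.2 ^ 2) _ fun z hz => by rw [eY z hz]
    · exact (cg (fun z => X' z.1 * Y' z.2) _ fun z hz => by rw [eX z hz, eY z hz]).symm
  rw [maxCorr_eq] at h
  have hne : (corrSet p).Nonempty := by
    by_contra hcon
    rw [Set.not_nonempty_iff_eq_empty.1 hcon, Real.sSup_empty] at h
    exact zero_ne_one h
  have hKne : K.Nonempty := by
    obtain ⟨r, hr⟩ := hne
    obtain ⟨q, hq, -⟩ := hred r hr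
    exact ⟨q, hq⟩
  obtain ⟨q, hqK, hmax⟩ := hK.exists_isMaxOn hKne
    (f := fun q => ∑ z : A × B, p z.1 z.2 * (q.1 z.1 * q.2 z.2)) (by fun_prop)
  have hge : 1 ≤ ∑ z : A × B, p z.1 z.2 * (q.1 z.1 * q.2 z.2) := by
    rw [← h]
    refine csSup_le hne fun r hr => ?_
    obtain ⟨q', hq', rfl⟩ := hred r hr
    exact hmax hq'
  obtain ⟨-, h1, h2, h3, h4⟩ := hqK
  refine ⟨q.1, q.2, h1, h3, fun a b hab => ?_⟩
  have hnn : ∀ z ∈ (univ : Finset (A × B)), 0 ≤ p z.1 z.2 * (q.1 z.1 - q.2 z.2) ^ 2 :=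
    fun z _ => mul_nonneg (hp.1 _ _) (sq_nonneg _)
  have hz : ∑ z : A × B, p z.1 z.2 * (q.1 z.1 - q.2 z.2) ^ 2 = 0 :=
    le_antisymm (by rw [sum_sq_sub, h3, h4]; linarith) (sum_nonneg hnn)
  have := (sum_eq_zero_iff_of_nonneg hnn).1 hz (a, b) (mem_univ _)
  simp only [mul_eq_zero, hab, false_or, ne_eq, OfNat.ofNat_ne_zero, not_false_eq_true,
    pow_eq_zero_iff] at this
  linarith

end OneCopy

/-! ### Extracting a nearly fair bit -/

/-- Adding atoms of mass at most `δ` one at a time, the total passes `1/2` with overshoot at most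
`δ`. -/
lemma exists_subset_near_half {ι : Type} [Fintype ι] (W : ι → ℝ) (δ : ℝ)
    (hW : ∀ i, W i ≤ δ) (h1 : ∑ i, W i = 1) :
    ∃ U : Finset ι, |∑ i ∈ U, W i - 1 / 2| ≤ δ := by
  classical
  have key : ∀ s : Finset ι, 1 / 2 ≤ ∑ i ∈ s, W i →
      ∃ U : Finset ι, 1 / 2 ≤ ∑ i ∈ U, W i ∧ ∑ i ∈ U, W i ≤ 1 / 2 + δ := by
    intro s
    induction s using Finset.induction_on with
    | empty => intro h; norm_num at h
    | insert a s ha ih =>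
      intro h
      by_cases hs : 1 / 2 ≤ ∑ i ∈ s, W i
      · exact ih hs
      · refine ⟨_, h, ?_⟩
        rw [sum_insert ha]
        linarith [hW a]
  obtain ⟨U, hU1, hU2⟩ := key univ (by rw [h1]; norm_num)
  exact ⟨U, by rw [abs_le]; constructor <;> linarith⟩

/-- The mass of the word `u` under i.i.d. copies of a bit `s` is the product of the masses of its
letters. -/
lemma fiber_weight {Z : Type} [Fintype Z] [DecidableEq Z] (P : Z → ℝ) (s : Z → Bool)
    (n : ℕ) (u : Fin n → Bool) :
    ∑ w ∈ univ.filter (fun w : Fin n → Z => (fun i => s (w i)) = u), ∏ i, P (w i) =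
      ∏ i, ∑ z ∈ univ.filter (fun z => s z = u i), P z := by
  rw [prod_univ_sum]
  refine sum_congr ?_ fun _ _ => rfl
  ext w
  simp [Fintype.mem_piFinset, funext_iff]

/-- Witsenhausen.  A common random bit can be extracted from
i.i.d. copies of `(A, B)` if and only if the maximal correlation `ρ(A,B)` equals 1. -/
theorem stmt_3 {A B : Type} [Fintype A] [DecidableEq A] [Fintype B] [DecidableEq B]
    (p : A → B → ℝ) (hp : JointIsDist p) :
    (∀ ε : ℝ, 0 < ε → ∃ (n : ℕ) (Γ : (Fin n → A) → Bool) (Λ : (Fin n → B) → Bool),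
      (∑ w ∈ univ.filter (fun w : Fin n → A × B =>
          Γ (fun i => (w i).1) ≠ Λ (fun i => (w i).2)), ∏ i, p (w i).1 (w i).2) < ε ∧
      |(∑ w ∈ univ.filter (fun w : Fin n → A × B => Γ (fun i => (w i).1) = false),
          ∏ i, p (w i).1 (w i).2) - 1 / 2| < ε ∧
      |(∑ w ∈ univ.filter (fun w : Fin n → A × B => Λ (fun i => (w i).2) = false),
          ∏ i, p (w i).1 (w i).2) - 1 / 2| < ε)
    ↔ maxCorr p = 1 := by
  constructor
  · intro hext
    by_contra hne
    have hlt : max (maxCorr p) 0 < 1 :=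
      max_lt (lt_of_le_of_ne (maxCorr_le_one p hp) hne) zero_lt_one
    have hb := corr_bound_iid p hp _ (corr_bound_one p hp)
    generalize max (maxCorr p) 0 = r at hlt hb
    obtain ⟨n, Γ, Λ, h1, h2, h3⟩ := hext (min (1 / 4) ((1 - r) / 8))
      (lt_min (by norm_num) (by linarith))
    have hε1 := min_le_left (1 / 4) ((1 - r) / 8)
    have hε2 := min_le_right (1 / 4) ((1 - r) / 8)
    generalize min (1 / 4) ((1 - r) / 8) = ε at *
    rw [iidExp_filter] at h1 h2 h3
    have hb := hb n (fun u => if Γ u = false then 1 else 0) (fun u => if Λ u = false then 1 else 0)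
    -- The indicators satisfy `1[Γ ≠ Λ] = X² + Y² - 2XY` with `X² = X` and `Y² = Y`.
    have hd : iidExp p n (fun w => if Γ (fun i => (w i).1) ≠ Λ (fun i => (w i).2) then 1 else 0) =
        iidExp p n (fun w => if Γ (fun i => (w i).1) = false then 1 else 0) +
        iidExp p n (fun w => if Λ (fun i => (w i).2) = false then 1 else 0) -
        2 * iidExp p n (fun w => (if Γ (fun i => (w i).1) = false then 1 else 0) *
          (if Λ (fun i => (w i).2) = false then 1 else 0)) := by
      unfold iidExp
      rw [mul_sum, ← sum_add_distrib, ← sum_sub_distrib]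
      refine sum_congr rfl fun w _ => ?_
      beta_reduce
      generalize Γ (fun i => (w i).1) = g
      generalize Λ (fun i => (w i).2) = l
      cases g <;> cases l <;> simp
      ring
    simp only [ite_pow, one_pow, ne_eq, OfNat.ofNat_ne_zero, not_false_eq_true, zero_pow] at hb
    rw [hd] at h1
    generalize iidExp p n (fun w => if Γ (fun i => (w i).1) = false then (1 : ℝ) else 0) = x at *
    generalize iidExp p n (fun w => if Λ (fun i => (w i).2) = false then (1 : ℝ) else 0) = y at *
    rw [abs_lt] at h2 h3
    have hx : 3 / 16 ≤ x - x ^ 2 := by nlinarith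
    have hy : 3 / 16 ≤ y - y ^ 2 := by nlinarith
    nlinarith [sq_nonneg (x - y), mul_nonneg (sub_nonneg.2 hlt.le) (sub_nonneg.2 hx),
      mul_nonneg (sub_nonneg.2 hlt.le) (sub_nonneg.2 hy)]
  · intro hρ ε hε
    obtain ⟨X, Y, hX, hX2, hXY⟩ := exists_perfect_pair p hp hρ
    let s : A → Bool := fun a => decide (0 < X a)
    let t : B → Bool := fun b => decide (0 < Y b)
    let m : Bool → ℝ := fun c => ∑ z ∈ univ.filter (fun z : A × B => s z.1 = c), p z.1 z.2
    have hm0 : ∀ c, 0 ≤ m c := fun c => sum_nonneg fun z _ => hp.1 _ _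
    have hm1 : m true + m false = 1 := by
      rw [← sum_weight p hp, ← sum_filter_add_sum_filter_not univ (fun z : A × B => s z.1 = true)]
      simp [m]
    -- `X` has mean zero and is not almost surely zero, so it cannot have a constant sign.
    have hzero : (∀ z : A × B, p z.1 z.2 * X z.1 = 0) → False := by
      intro h0
      refine zero_ne_one (hX2 ▸ (sum_eq_zero fun z _ => ?_ :
        ∑ z : A × B, p z.1 z.2 * X z.1 ^ 2 = 0).symm)
      rw [pow_two, ← mul_assoc, h0, zero_mul]
    have hmne : ∀ c, m c ≠ 0 := by
      intro c hc
      have hc' : ∀ z : A × B, s z.1 = c → p z.1 z.2 = 0 := fun z hz =>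
        (sum_eq_zero_iff_of_nonneg fun z _ => hp.1 z.1 z.2).1 hc z (by simp [hz])
      apply hzero
      cases c with
      | false =>
        have := (sum_eq_zero_iff_of_nonneg fun (z : A × B) _ => ?_).1 hX
        · exact fun z => this z (mem_univ z)
        · by_cases hz : 0 < X z.1
          · exact mul_nonneg (hp.1 _ _) hz.le
          · simp [hc' z (by simp [s, hz])]
      | true =>
        have := (sum_eq_zero_iff_of_nonpos fun (z : A × B) _ => ?_).1 hX
        · exact fun z => this z (mem_univ z)
        · by_cases hz : 0 < X z.1
          · simp [hc' z (by simp [s, hz])]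
          · exact mul_nonpos_of_nonneg_of_nonpos (hp.1 _ _) (not_lt.1 hz)
    have hpos : ∀ c, 0 < m c := fun c => lt_of_le_of_ne (hm0 c) (hmne c).symm
    set M := max (m true) (m false) with hM
    have hM0 : 0 ≤ M := (hm0 true).trans (le_max_left _ _)
    have hMlt : M < 1 := max_lt (by linarith [hpos false]) (by linarith [hpos true])
    have hmM : ∀ c, m c ≤ M := by
      intro c; cases c
      · exact le_max_right _ _
      · exact le_max_left _ _
    obtain ⟨n, hn⟩ := exists_pow_lt_of_lt_one hε hMlt
    have hfw : ∀ u : Fin n → Bool, ∑ w ∈ univ.filter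
        (fun w : Fin n → A × B => (fun i => s (w i).1) = u), ∏ i, p (w i).1 (w i).2 =
        ∏ i, m (u i) := fun u => fiber_weight (fun z : A × B => p z.1 z.2) (fun z => s z.1) n u
    have htot : ∑ u : Fin n → Bool, ∏ i, m (u i) = 1 := by
      have h := iidExp_one p hp n
      simp only [iidExp, mul_one] at h
      rw [← h, ← sum_fiberwise univ (fun w : Fin n → A × B => (fun i => s (w i).1))]
      exact sum_congr rfl fun u _ => (hfw u).symm
    obtain ⟨U, hU⟩ := exists_subset_near_half (fun u : Fin n → Bool => ∏ i, m (u i)) (M ^ n)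
      (fun u => (prod_le_prod (fun i _ => hm0 _) fun i _ => hmM _).trans (by simp)) htot
    have hagree : ∀ w : Fin n → A × B, ∏ i, p (w i).1 (w i).2 ≠ 0 →
        (fun i => s (w i).1) = (fun i => t (w i).2) := by
      intro w hw
      funext i
      simp only [s, t, hXY _ _ (prod_ne_zero_iff.1 hw i (mem_univ i))]
    let Γ : (Fin n → A) → Bool := fun x => !decide ((fun i => s (x i)) ∈ U)
    let Λ : (Fin n → B) → Bool := fun x => !decide ((fun i => t (x i)) ∈ U)
    have hΓΛ : ∀ w : Fin n → A × B, ∏ i, p (w i).1 (w i).2 ≠ 0 →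
        Γ (fun i => (w i).1) = Λ (fun i => (w i).2) := by
      intro w hw
      simp only [Γ, Λ, hagree w hw]
    have hΓ : ∑ w ∈ univ.filter (fun w : Fin n → A × B => Γ (fun i => (w i).1) = false),
        ∏ i, p (w i).1 (w i).2 = ∑ u ∈ U, ∏ i, m (u i) := by
      rw [← sum_congr rfl fun u _ => hfw u, sum_fiberwise_eq_sum_filter]
      simp [Γ]
    have hΛ : ∑ w ∈ univ.filter (fun w : Fin n → A × B => Λ (fun i => (w i).2) = false),
        ∏ i, p (w i).1 (w i).2 =
        ∑ w ∈ univ.filter (fun w : Fin n → A × B => Γ (fun i => (w i).1) = false),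
        ∏ i, p (w i).1 (w i).2 := by
      rw [sum_filter, sum_filter]
      refine sum_congr rfl fun w _ => ?_
      by_cases hw : ∏ i, p (w i).1 (w i).2 = 0
      · simp [hw]
      · rw [hΓΛ w hw]
    refine ⟨n, Γ, Λ, ?_, ?_, ?_⟩
    · rw [sum_eq_zero]
      · exact hε
      · intro w hw
        by_contra h0
        exact (mem_filter.1 hw).2 (hΓΛ w h0)
    · rw [hΓ]; exact hU.trans_lt hn
    · rw [hΛ, hΓ]; exact hU.trans_lt hn
end

section
/- Let (W, R₁, R₂) be random variables such that R₁ and R₂ are mutually independent and independent of W, where W takes values in a finite set. Let K₁ = Γ(W, R₁) and K₂ = Λ(W, R₂) be {0,1}-valued, and suppose Pr[K₁ ≠ K₂] ≤ ε, |Pr[K₁ = 0] − 1/2| ≤ ε, and |Pr[K₂ = 0] − 1/2| ≤ ε, where in fact Γ depends on W only through a component A of W and Λ only through a component B of W (i.e., W = (A,B)). Define the deterministic functions K₁′ = Γ′(A) = argmax_k Pr[K₁ = k | A] and K₂′ = Λ′(B) = argmax_k Pr[K₂ = k | B]. Then Pr[K₁′ ≠ K₂′] ≤ 3ε, |Pr[K₁′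 = 0] − 1/2| ≤ 2ε, and |Pr[K₂′ = 0] − 1/2| ≤ 2ε. -/
/-!
Write `p a = Pr[K₁ = 0 | A = a]` and `q b = Pr[K₂ = 0 | B = b]`. By independence the bits disagree,
given `(a, b)`, with probability `d = p (1 - q) + (1 - p) q`. As a convex combination of `p` and
`1 - p`, this is at least `min p (1 - p)`, the probability that `K₁` differs from its most likely
value; the same holds for `q`. Averaging over `(a, b)` shows that rounding shifts each marginal by
at most `ε` (`bias_of_pointwise`). If the rounded bits disagree at `(a, b)`, then `p` and `q` lie
on opposite sides of `1 / 2`, so `d ≥ 1 / 2`; hence `Pr[K₁' ≠ K₂'] ≤ 2 Pr[K₁ ≠ K₂]`.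
-/

open Finset

lemma sum_false_add_sum_true {R : Type} [Fintype R] (r : R → ℝ) (hr : IsDist r) (f : R → Bool) :
    (∑ x, if f x = false then r x else 0) + (∑ x, if f x = true then r x else 0) = 1 := by
  rw [← hr.2, ← Finset.sum_add_distrib]
  refine Finset.sum_congr rfl fun x _ => ?_
  cases f x <;> simp

lemma sum_ite_nonneg {R : Type} [Fintype R] (r : R → ℝ) (hr : IsDist r) (f : R → Bool)
    (k : Bool) : 0 ≤ ∑ x, if f x = k then r x else 0 :=
  Finset.sum_nonneg fun x _ => by
    have := hr.1 x
    split_ifs <;> simp [this]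

lemma sum_sum_ne {R₁ R₂ : Type} [Fintype R₁] [Fintype R₂] (r₁ : R₁ → ℝ) (r₂ : R₂ → ℝ)
    (f : R₁ → Bool) (g : R₂ → Bool) (m : ℝ) :
    (∑ x₁, ∑ x₂, if f x₁ ≠ g x₂ then m * r₁ x₁ * r₂ x₂ else 0) =
      m * ((∑ x, if f x = false then r₁ x else 0) * (∑ x, if g x = true then r₂ x else 0) +
        (∑ x, if f x = true then r₁ x else 0) * (∑ x, if g x = false then r₂ x else 0)) := by
  rw [Finset.sum_mul_sum, Finset.sum_mul_sum, ← Finset.sum_add_distrib, Finset.mul_sum]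
  refine Finset.sum_congr rfl fun x _ => ?_
  rw [← Finset.sum_add_distrib, Finset.mul_sum]
  refine Finset.sum_congr rfl fun y _ => ?_
  cases f x <;> cases g y <;> simp [mul_assoc]

/-- If the rounded bit `g a` is, at every `(a, b)`, within `d a b` of the conditional probability
`p a` of the value `false`, and `d` has mean at most `ε`, then rounding moves the probability of
`false` by at most `ε`. -/
lemma bias_of_pointwise {A B : Type} [Fintype A] [Fintype B] (μ d : A → B → ℝ)
    (hμ : ∀ a b, 0 ≤ μ a b) (p : A → ℝ) (g : A → Bool) (ε : ℝ)
    (hd : ∀ a b, |(if g a = false then 1 else 0) - p a| ≤ d a b)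
    (hε : ∑ a, ∑ b, μ a b * d a b ≤ ε)
    (hp : |(∑ a, (∑ b, μ a b) * p a) - 1 / 2| ≤ ε) :
    |(∑ a, if g a = false then (∑ b, μ a b) else 0) - 1 / 2| ≤ 2 * ε := by
  have key : |(∑ a, if g a = false then (∑ b, μ a b) else 0) - ∑ a, (∑ b, μ a b) * p a| ≤ ε := by
    have h : (∑ a, if g a = false then (∑ b, μ a b) else 0) - ∑ a, (∑ b, μ a b) * p a =
        ∑ a, ∑ b, μ a b * ((if g a = false then 1 else 0) - p a) := by
      rw [← Finset.sum_sub_distrib]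
      refine Finset.sum_congr rfl fun a _ => ?_
      rw [← Finset.sum_mul]
      split_ifs <;> ring
    rw [h]
    refine le_trans (Finset.abs_sum_le_sum_abs _ _) (le_trans (Finset.sum_le_sum fun a _ => ?_) hε)
    refine le_trans (Finset.abs_sum_le_sum_abs _ _) (Finset.sum_le_sum fun b _ => ?_)
    rw [abs_mul, abs_of_nonneg (hμ a b)]
    exact mul_le_mul_of_nonneg_left (hd a b) (hμ a b)
  rw [abs_le] at *
  constructor <;> linarith [key.1, key.2, hp.1, hp.2]

/-- The distance from a bit's probability `p` of `false` to its rounding is `min p p'`, which is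
at most the convex combination `p * q' + p' * q` of `p` and `p'`. -/
lemma abs_round_sub_le (p p' q q' : ℝ) (hp : p + p' = 1) (hq : q + q' = 1)
    (hq0 : 0 ≤ q) (hq0' : 0 ≤ q') (hp0 : 0 ≤ p) (hp0' : 0 ≤ p') (k : Bool)
    (h0 : k = false → p' ≤ p) (h1 : k = true → p ≤ p') :
    |(if k = false then 1 else 0) - p| ≤ p * q' + p' * q := by
  obtain rfl : p' = 1 - p := by linarith
  obtain rfl : q' = 1 - q := by linarith
  cases k
  · have := h0 rfl
    rw [abs_le]
    constructor <;> simp only [if_true] <;> nlinarith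
  · have := h1 rfl
    rw [abs_le]
    constructor <;> simp <;> nlinarith

/-- Private randomness is not needed for common random bit
extraction: if `K₁ = Γ(A, R₁)` and `K₂ = Λ(B, R₂)` (with `R₁, R₂` independent of each
other and of `W = (A, B)`) satisfy `Pr[K₁ ≠ K₂] ≤ ε` and are `ε`-close to uniform,
then the deterministic bits `K₁' = Γ'(A)`, `K₂' = Λ'(B)` obtained by taking the
(conditionally) most likely value satisfy `Pr[K₁' ≠ K₂'] ≤ 3ε` and are `2ε`-close
to uniform. -/
theorem stmt_4 {A B R₁ R₂ : Type} [Fintype A] [Fintype B] [Fintype R₁] [Fintype R₂]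
    (μ : A → B → ℝ) (hμ : JointIsDist μ)
    (r₁ : R₁ → ℝ) (hr₁ : IsDist r₁) (r₂ : R₂ → ℝ) (hr₂ : IsDist r₂)
    (Γ : A → R₁ → Bool) (Λ : B → R₂ → Bool) (ε : ℝ)
    (hneq : (∑ a, ∑ b, ∑ x₁, ∑ x₂,
        if Γ a x₁ ≠ Λ b x₂ then μ a b * r₁ x₁ * r₂ x₂ else 0) ≤ ε)
    (hK₁ : |(∑ a, ∑ x₁, if Γ a x₁ = false then (∑ b, μ a b) * r₁ x₁ else 0) - 1 / 2| ≤ ε)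
    (hK₂ : |(∑ b, ∑ x₂, if Λ b x₂ = false then (∑ a, μ a b) * r₂ x₂ else 0) - 1 / 2| ≤ ε)
    (Γ' : A → Bool) (Λ' : B → Bool)
    (hΓ' : ∀ a k, (∑ x₁, if Γ a x₁ = k then r₁ x₁ else 0) ≤
      ∑ x₁, if Γ a x₁ = Γ' a then r₁ x₁ else 0)
    (hΛ' : ∀ b k, (∑ x₂, if Λ b x₂ = k then r₂ x₂ else 0) ≤
      ∑ x₂, if Λ b x₂ = Λ' b then r₂ x₂ else 0) :
    (∑ a, ∑ b, if Γ' a ≠ Λ' b then μ a b else 0) ≤ 3 * ε ∧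
    |(∑ a, if Γ' a = false then (∑ b, μ a b) else 0) - 1 / 2| ≤ 2 * ε ∧
    |(∑ b, if Λ' b = false then (∑ a, μ a b) else 0) - 1 / 2| ≤ 2 * ε := by
  set p : A → ℝ := fun a => ∑ x, if Γ a x = false then r₁ x else 0 with hp
  set p' : A → ℝ := fun a => ∑ x, if Γ a x = true then r₁ x else 0 with hp'
  set q : B → ℝ := fun b => ∑ x, if Λ b x = false then r₂ x else 0 with hq
  set q' : B → ℝ := fun b => ∑ x, if Λ b x = true then r₂ x else 0 with hq'
  have hpp : ∀ a, p a + p' a = 1 := fun a => sum_false_add_sum_true r₁ hr₁ (Γ a)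
  have hqq : ∀ b, q b + q' b = 1 := fun b => sum_false_add_sum_true r₂ hr₂ (Λ b)
  have p0 : ∀ a, 0 ≤ p a := fun a => sum_ite_nonneg r₁ hr₁ (Γ a) _
  have p0' : ∀ a, 0 ≤ p' a := fun a => sum_ite_nonneg r₁ hr₁ (Γ a) _
  have q0 : ∀ b, 0 ≤ q b := fun b => sum_ite_nonneg r₂ hr₂ (Λ b) _
  have q0' : ∀ b, 0 ≤ q' b := fun b => sum_ite_nonneg r₂ hr₂ (Λ b) _
  have hd : ∑ a, ∑ b, μ a b * (p a * q' b + p' a * q b) ≤ ε := by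
    simpa only [sum_sum_ne] using hneq
  have hΓ0 : ∀ a, Γ' a = false → p' a ≤ p a := fun a h => by
    have := hΓ' a true
    rwa [h] at this
  have hΓ1 : ∀ a, Γ' a = true → p a ≤ p' a := fun a h => by
    have := hΓ' a false
    rwa [h] at this
  have hΛ0 : ∀ b, Λ' b = false → q' b ≤ q b := fun b h => by
    have := hΛ' b true
    rwa [h] at this
  have hΛ1 : ∀ b, Λ' b = true → q b ≤ q' b := fun b h => by
    have := hΛ' b false
    rwa [h] at this
  have hε : 0 ≤ ε := le_trans (abs_nonneg _) hK₁
  refine ⟨?_, ?_, ?_⟩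
  · have h2 : (∑ a, ∑ b, if Γ' a ≠ Λ' b then μ a b else 0) ≤
        2 * ∑ a, ∑ b, μ a b * (p a * q' b + p' a * q b) := by
      simp only [Finset.mul_sum]
      refine Finset.sum_le_sum fun a _ => Finset.sum_le_sum fun b _ => ?_
      have hm := hμ.1 a b
      have e1 : p' a = 1 - p a := by linarith [hpp a]
      have e2 : q' b = 1 - q b := by linarith [hqq b]
      have hnn : 0 ≤ p a * q' b + p' a * q b :=
        add_nonneg (mul_nonneg (p0 a) (q0' b)) (mul_nonneg (p0' a) (q0 b))
      split_ifs with h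
      · -- `d - 1 / 2 = (p - p') * (q' - q) / 2`, and both factors have the same sign.
        have hhalf : 1 / 2 ≤ p a * q' b + p' a * q b := by
          cases hg : Γ' a <;> cases hl : Λ' b <;> simp [hg, hl] at h
          · nlinarith [mul_nonneg (sub_nonneg.2 (hΓ0 a hg)) (sub_nonneg.2 (hΛ1 b hl))]
          · nlinarith [mul_nonneg (sub_nonneg.2 (hΓ1 a hg)) (sub_nonneg.2 (hΛ0 b hl))]
        nlinarith [mul_le_mul_of_nonneg_left hhalf hm]
      · linarith [mul_nonneg hm hnn]
    linarith
  · refine bias_of_pointwise μ _ hμ.1 p Γ' ε (fun a b => abs_round_sub_le (p a) (p' a) (q b) (q' b)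
      (hpp a) (hqq b) (q0 b) (q0' b) (p0 a) (p0' a) _ (hΓ0 a) (hΓ1 a)) hd ?_
    simpa only [hp, Finset.mul_sum, mul_ite, mul_zero] using hK₁
  · refine bias_of_pointwise (fun b a => μ a b) _ (fun b a => hμ.1 a b) q Λ' ε
      (fun b a => abs_round_sub_le (q b) (q' b) (p a) (p' a)
      (hqq b) (hpp a) (p0 a) (p0' a) (q0 b) (q0' b) _ (hΛ0 b) (hΛ1 b)) ?_ ?_
    · rw [Finset.sum_comm]
      refine le_trans (le_of_eq ?_) hd
      refine Finset.sum_congr rfl fun a _ => Finset.sum_congr rfl fun b _ => ?_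
      ring
    · simpa only [hq, Finset.mul_sum, mul_ite, mul_zero] using hK₂
end

section
/- Fix 0 < δ ≤ 1/2 and let x_1,…,x_n, y_1,…,y_n, z_1,…,z_n ∈ {0,1}. If (0.x_1 … x_n)_{1/2} + (0.y_1 … y_n)_{1/2} = (0.z_1 … z_n)_{1/2} and (0.x_1 … x_n)_{1/2} ≥ (0.y_1 … y_n)_{1/2}, then (0.x_1 … x_n)_δ + (δ/(1−δ)) · (0.y_1 … y_n)_δ ≥ (0.z_1 … z_n)_δ. -/
/-!
The first bit acts on `valD` by `0x ↦ (1 - δ) · valD x` and `1x ↦ (1 - δ) + δ · valD x`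
(`valD_succ`). Hence `valD δ x` depends only on `n` and on the integer `k` with binary digits `x`;
write it `expansion δ n k`, which is `F(k / 2ⁿ)` for the de Rham function `F` of parameter `1 - δ`.

The heart of the proof is the inequality `F((a + b) / 2) ≤ (1 - δ) F(a) + δ F(b)` for `b ≤ a`
(`expansion_add_le`), proved by induction on the number of bits, splitting on the leading bits of
`a` and `b`. When they agree, the induction hypothesis applies to the remaining bits. When they
differ, the order of the remaining bits is unknown, but the bounds `0 ≤ F ≤ 1` make the induction
hypothesis strong enough in both orders. When `a + b < 1` the left side is `(1 - δ) F(a + b)`,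
and division by `1 - δ` gives the theorem.
-/

open Finset

/-- `s_x(i)`: the number of ones among the bits of `x` preceding position `i`. -/
def sBits {n : ℕ} (x : Fin n → Bool) (i : Fin n) : ℕ :=
  (univ.filter fun j : Fin n => j < i ∧ x j = true).card

/-- The base-`δ` expansion `(0.x₁…x_n)_δ = ∑ᵢ xᵢ (1−δ)^i (δ/(1−δ))^{s_x(i)}`
(indices starting from 1); for `δ = 1/2` this is the usual binary expansion. -/
noncomputable def valD (δ : ℝ) {n : ℕ} (x : Fin n → Bool) : ℝ :=
  ∑ i, if x i = true then (1 - δ) ^ (i.1 + 1) * (δ / (1 - δ)) ^ sBits x i else 0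

/-- The value of the base-`δ` expansion whose `n` bits are the binary digits of `k < 2 ^ n`,
most significant first. -/
noncomputable def expansion (δ : ℝ) : ℕ → ℕ → ℝ
  | 0, _ => 0
  | n + 1, k => if k < 2 ^ n then (1 - δ) * expansion δ n k
      else (1 - δ) + δ * expansion δ n (k - 2 ^ n)

lemma expansion_of_lt (δ : ℝ) {n k : ℕ} (h : k < 2 ^ n) :
    expansion δ (n + 1) k = (1 - δ) * expansion δ n k := by
  simp [expansion, h]

lemma expansion_add_pow (δ : ℝ) (n k : ℕ) :
    expansion δ (n + 1) (2 ^ n + k) = (1 - δ) + δ * expansion δ n k := by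
  simp [expansion]

lemma expansion_mem {δ : ℝ} (h0 : 0 ≤ δ) (h1 : δ ≤ 1) (n k : ℕ) :
    0 ≤ expansion δ n k ∧ expansion δ n k ≤ 1 := by
  induction n generalizing k with
  | zero => simp [expansion]
  | succ n ih =>
    rw [expansion]
    split_ifs
    · obtain ⟨h, h'⟩ := ih k
      constructor <;> nlinarith
    · obtain ⟨h, h'⟩ := ih (k - 2 ^ n)
      constructor <;> nlinarith

/-- For `b ≤ a`, the expansion of the average of `a` and `b` (which is `a + b` read with one more
bit) is at most the average of the expansions with weights `1 - δ` and `δ`. -/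
lemma expansion_add_le {δ : ℝ} (h0 : 0 < δ) (h1 : δ ≤ 1 / 2) (n : ℕ) {a b : ℕ}
    (hba : b ≤ a) (ha : a < 2 ^ n) :
    expansion δ (n + 1) (a + b) ≤ (1 - δ) * expansion δ n a + δ * expansion δ n b := by
  induction n generalizing a b with
  | zero =>
    obtain rfl : a = 0 := by simpa using ha
    obtain rfl : b = 0 := by omega
    simp [expansion]
  | succ n ih =>
    have hpow : 2 ^ (n + 1) = 2 ^ n + 2 ^ n := by ring
    rcases lt_or_ge a (2 ^ n) with ha' | ha'
    · rw [expansion_of_lt δ (show a + b < 2 ^ (n + 1) by omega), expansion_of_lt δ ha',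
        expansion_of_lt δ (show b < 2 ^ n by omega)]
      nlinarith [mul_le_mul_of_nonneg_left (ih hba ha') (show 0 ≤ 1 - δ by linarith)]
    obtain ⟨c, rfl⟩ := Nat.exists_eq_add_of_le ha'
    rcases lt_or_ge b (2 ^ n) with hb' | hb'
    · rw [expansion_add_pow, expansion_of_lt δ hb']
      -- The order of `c` and `b` is unknown, so the larger value is named `u`, the smaller `v`.
      obtain ⟨u, v, huv, hu, hadd, hF⟩ : ∃ u v, v ≤ u ∧ u < 2 ^ n ∧ c + b = u + v ∧
          expansion δ n c + expansion δ n b = expansion δ n u + expansion δ n v := by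
        rcases le_total b c with h | h
        · exact ⟨c, b, h, by omega, rfl, rfl⟩
        · exact ⟨b, c, h, hb', add_comm _ _, add_comm _ _⟩
      have key := ih huv hu
      have hrhs : (1 - δ) * ((1 - δ) + δ * expansion δ n c) + δ * ((1 - δ) * expansion δ n b)
          = (1 - δ) * ((1 - δ) + δ * (expansion δ n u + expansion δ n v)) := by
        rw [← hF]; ring
      rw [hrhs, show 2 ^ n + c + b = 2 ^ n + (u + v) by omega]
      rcases lt_or_ge (u + v) (2 ^ n) with hs | hs
      · rw [expansion_of_lt δ (show 2 ^ n + (u + v) < 2 ^ (n + 1) by omega), expansion_add_pow]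
        rw [expansion_of_lt δ hs] at key
        have hv := (expansion_mem h0.le (by linarith) n v).1
        have hsub : expansion δ n (u + v) ≤ expansion δ n u + expansion δ n v := by
          refine le_of_mul_le_mul_left ?_ (show 0 < 1 - δ by linarith)
          nlinarith
        have hp : 0 ≤ 1 - δ := by linarith
        gcongr
      · obtain ⟨s, hs'⟩ := Nat.exists_eq_add_of_le hs
        rw [hs', expansion_add_pow] at key
        rw [hs', show 2 ^ n + (2 ^ n + s) = 2 ^ (n + 1) + s by omega, expansion_add_pow,
          expansion_of_lt δ (show s < 2 ^ n by omega)]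
        have hu1 := (expansion_mem h0.le (by linarith) n u).2
        -- `key` says `(1 - δ)(1 - F u) ≤ δ (F v - F s)`, so `F s ≤ F v` and `δ` may be
        -- replaced by the larger `1 - δ`.
        have hsv : 0 ≤ expansion δ n v - expansion δ n s := by
          refine nonneg_of_mul_nonneg_right ?_ h0
          nlinarith
        have hdual : 1 + expansion δ n s ≤ expansion δ n u + expansion δ n v := by
          refine le_of_mul_le_mul_left ?_ (show 0 < 1 - δ by linarith)
          nlinarith
        have hp : 0 ≤ (1 - δ) * δ := mul_nonneg (by linarith) h0.le
        nlinarith [mul_le_mul_of_nonneg_left hdual hp]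
    · obtain ⟨d, rfl⟩ := Nat.exists_eq_add_of_le hb'
      rw [show 2 ^ n + c + (2 ^ n + d) = 2 ^ (n + 1) + (c + d) by omega, expansion_add_pow,
        expansion_add_pow, expansion_add_pow]
      nlinarith [mul_le_mul_of_nonneg_left (ih (show d ≤ c by omega) (by omega)) h0.le]

lemma sBits_succ {n : ℕ} (x : Fin (n + 1) → Bool) (i : Fin n) :
    sBits x i.succ = (if x 0 = true then 1 else 0) + sBits (fun j => x j.succ) i := by
  simp only [sBits, Finset.card_filter, Fin.sum_univ_succ, Fin.succ_lt_succ_iff, Fin.succ_pos,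
    true_and]

lemma valD_succ {δ : ℝ} (h1 : δ < 1) {n : ℕ} (x : Fin (n + 1) → Bool) :
    valD δ x = if x 0 = true then (1 - δ) + δ * valD δ (fun j => x j.succ)
      else (1 - δ) * valD δ (fun j => x j.succ) := by
  have hp : 1 - δ ≠ 0 := by linarith
  have hs0 : sBits x 0 = 0 := by simp [sBits]
  rw [valD, Fin.sum_univ_succ]
  simp only [sBits_succ, hs0, valD]
  split_ifs with h
  · rw [Finset.mul_sum]
    congr 1
    · simp
    · refine Finset.sum_congr rfl fun i _ => ?_
      split_ifs
      · rw [Fin.val_succ, pow_succ _ (i.1 + 1), pow_add _ 1, pow_one]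
        generalize (δ / (1 - δ)) ^ sBits (fun j => x j.succ) i = t
        field_simp
      · simp
  · rw [Finset.mul_sum, zero_add]
    refine Finset.sum_congr rfl fun i _ => ?_
    split_ifs
    · rw [Fin.val_succ, zero_add, pow_succ _ (i.1 + 1)]
      ring
    · simp

/-- The integer with binary digits `x`, most significant first. -/
def bitsNat : {n : ℕ} → (Fin n → Bool) → ℕ
  | 0, _ => 0
  | n + 1, x => (if x 0 = true then 2 ^ n else 0) + bitsNat fun j : Fin n => x j.succ

lemma bitsNat_lt {n : ℕ} (x : Fin n → Bool) : bitsNat x < 2 ^ n := by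
  induction n with
  | zero => simp [bitsNat]
  | succ n ih =>
    have := ih fun j => x j.succ
    rw [bitsNat, pow_succ]
    split_ifs <;> omega

lemma valD_eq_expansion {δ : ℝ} (h1 : δ < 1) {n : ℕ} (x : Fin n → Bool) :
    valD δ x = expansion δ n (bitsNat x) := by
  induction n with
  | zero => simp [valD, expansion]
  | succ n ih =>
    rw [valD_succ h1, bitsNat, ih]
    split_ifs
    · rw [expansion_add_pow]
    · rw [zero_add, expansion_of_lt δ (bitsNat_lt _)]

lemma valD_half {n : ℕ} (x : Fin n → Bool) : valD (1 / 2) x = bitsNat x / 2 ^ n := by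
  induction n with
  | zero => simp [valD, bitsNat]
  | succ n ih =>
    rw [valD_succ (by norm_num), bitsNat, ih]
    split_ifs <;> push_cast <;> field_simp <;> ring

/-- Lemma `lemma:basedelta`.  If
`(0.x₁…x_n)_{1/2} + (0.y₁…y_n)_{1/2} = (0.z₁…z_n)_{1/2}` and
`(0.x₁…x_n)_{1/2} ≥ (0.y₁…y_n)_{1/2}`, then
`(0.x₁…x_n)_δ + (δ/(1−δ))(0.y₁…y_n)_δ ≥ (0.z₁…z_n)_δ`. -/
theorem stmt_11 (δ : ℝ) (hδ0 : 0 < δ) (hδ : δ ≤ 1 / 2) {n : ℕ}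
    (x y z : Fin n → Bool)
    (hsum : valD (1 / 2) x + valD (1 / 2) y = valD (1 / 2) z)
    (hge : valD (1 / 2) y ≤ valD (1 / 2) x) :
    valD δ z ≤ valD δ x + (δ / (1 - δ)) * valD δ y := by
  have hpow : (0 : ℝ) < 2 ^ n := by positivity
  have hp : 0 < 1 - δ := by linarith
  rw [valD_half, valD_half, valD_half, ← add_div, div_left_inj' hpow.ne'] at hsum
  rw [valD_half, valD_half, div_le_div_iff_of_pos_right hpow] at hge
  have hadd : bitsNat x + bitsNat y = bitsNat z := by exact_mod_cast hsum
  have hle : bitsNat y ≤ bitsNat x := by exact_mod_cast hge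
  have key := expansion_add_le hδ0 hδ n hle (bitsNat_lt x)
  rw [hadd, expansion_of_lt δ (bitsNat_lt z)] at key
  have h1 : δ < 1 := by linarith
  rw [valD_eq_expansion h1, valD_eq_expansion h1, valD_eq_expansion h1]
  refine le_of_mul_le_mul_left (key.trans_eq ?_) hp
  field_simp
end

section
/- Let 𝒜 be a finite set, {p_s : s ∈ 𝒮} a finite family of probability distributions on 𝒜 with p_s(a) > 0 for all s, a, and let C : 𝒜 → 𝒞 be a function to a finite set 𝒞. Let ℒ_A = {X : 𝒜 → ℝ : E_{(s)}[X] is the same for all s ∈ 𝒮}, and ℒ′_A = ℒ_A ∩ (𝟏_A)^⊥, where orthogonality is with respect to ⟨X, X′⟩_* = (1/|𝒜|)Σ_a X(a)X′(a) and 𝟏_A is the all-ones function. Assume that the only function in ℒ′_A that factors through C (i.e., is of the form ψ ∘ C for some ψ : 𝒞 → ℝ) is the zero function. Then there exists Δ′ > 0 such that for every s ∈ 𝒮 and every X ∈ ℒ′_A, writing X = U + U′ where U(a) = E_{(s)}[X | C = C(a)] is the conditional expectation of X given C under p_s and U′ = X − U, one has ‖U′‖_{(s)} ≥ Δ′ ‖U‖_{(s)},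 where ‖X‖_{(s)} = (Σ_a p_s(a) X(a)²)^{1/2}. -/
/-!
The residual map `X ↦ X - E_(s)[X | C]` is linear, and its kernel consists of functions of `C`,
so by hypothesis it is injective on `ℒ'_A`. Finite dimension makes it bounded below there
(`exists_bound`), first in the sup norm and then, since `p s` is a distribution of full support,
in `‖·‖_(s)` (`normW_le_norm`, `norm_le_normW`). As `S` is finite, the sum of the constants
obtained for the individual `s` gives a uniform one.
-/

open Finset

attribute [local instance] Classical.propDecidable

/-- `E_(s)[X] = ∑ₐ pₛ(a) X(a)`. -/
def expw {A : Type*} [Fintype A] (q : A → ℝ) (X : A → ℝ) : ℝ := ∑ a, q a * X a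

/-- The inner product `⟨X, X'⟩_*` w.r.t. the uniform distribution on `A`. -/
noncomputable def innerStar {A : Type*} [Fintype A] (X X' : A → ℝ) : ℝ :=
  (∑ a, X a * X' a) / (Fintype.card A)

/-- The norm `‖X‖_(s)` of `X : A → ℝ` w.r.t. a distribution `q` on `A`. -/
noncomputable def normW {A : Type*} [Fintype A] (q : A → ℝ) (X : A → ℝ) : ℝ :=
  Real.sqrt (∑ a, q a * X a ^ 2)

/-- The conditional expectation `U(a) = E_q[X | C = C(a)]` of `X` given `C` under
the distribution `q`. -/
noncomputable def condExpW {A 𝒞 : Type*} [Fintype A] (q : A → ℝ) (Cf : A → 𝒞)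
    (X : A → ℝ) (a : A) : ℝ :=
  (∑ a' ∈ univ.filter (fun a' => Cf a' = Cf a), q a' * X a') /
  (∑ a' ∈ univ.filter (fun a' => Cf a' = Cf a), q a')

/-- `X ↦ X - E_q[X | C]` as a linear map. -/
noncomputable def condResidual {A 𝒞 : Type} [Fintype A] (q : A → ℝ) (Cf : A → 𝒞) :
    (A → ℝ) →ₗ[ℝ] (A → ℝ) where
  toFun X := X - condExpW q Cf X
  map_add' X Y := by
    funext a
    simp only [condExpW, Pi.add_apply, Pi.sub_apply, mul_add, Finset.sum_add_distrib, add_div]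
    ring
  map_smul' c X := by
    funext a
    simp only [condExpW, Pi.smul_apply, Pi.sub_apply, smul_eq_mul, RingHom.id_apply,
      mul_left_comm _ c, ← Finset.mul_sum, mul_div_assoc, mul_sub]

/-- The subspace `ℒ'_A` of functions orthogonal to `𝟏` with the same expectation under
every `p s`. -/
def commonMean {A S : Type} [Fintype A] (p : S → A → ℝ) : Submodule ℝ (A → ℝ) where
  carrier := {X | (∀ s₁ s₂, expw (p s₁) X = expw (p s₂) X) ∧ innerStar X (fun _ => 1) = 0}
  zero_mem' := by simp [expw, innerStar]
  add_mem' := by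
    rintro X Y ⟨hX, hX'⟩ ⟨hY, hY'⟩
    refine ⟨fun s₁ s₂ => ?_, ?_⟩
    · have h1 := hX s₁ s₂
      have h2 := hY s₁ s₂
      simp only [expw, Pi.add_apply, mul_add, Finset.sum_add_distrib] at *
      rw [h1, h2]
    · simp only [innerStar, Pi.add_apply, add_mul, Finset.sum_add_distrib, add_div] at *
      rw [hX', hY', add_zero]
  smul_mem' := by
    rintro c X ⟨hX, hX'⟩
    refine ⟨fun s₁ s₂ => ?_, ?_⟩
    · have h1 := hX s₁ s₂
      simp only [expw, Pi.smul_apply, smul_eq_mul, mul_left_comm _ c, ← Finset.mul_sum] at *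
      rw [h1]
    · simp only [innerStar, Pi.smul_apply, smul_eq_mul, mul_assoc, ← Finset.mul_sum,
        mul_div_assoc] at *
      rw [hX', mul_zero]

lemma normW_le_norm {A : Type} [Fintype A] {q : A → ℝ} (hq : IsDist q) (Y : A → ℝ) :
    normW q Y ≤ ‖Y‖ := by
  refine Real.sqrt_le_iff.2 ⟨norm_nonneg _, ?_⟩
  calc ∑ a, q a * Y a ^ 2 ≤ ∑ a, q a * ‖Y‖ ^ 2 := by
        refine Finset.sum_le_sum fun a _ => mul_le_mul_of_nonneg_left ?_ (hq.1 a)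
        rw [← sq_abs]
        exact pow_le_pow_left₀ (abs_nonneg _) (norm_le_pi_norm Y a) 2
    _ = ‖Y‖ ^ 2 := by rw [← Finset.sum_mul, hq.2, one_mul]

lemma norm_le_normW {A : Type} [Fintype A] {q : A → ℝ} (hpos : ∀ a, 0 < q a) (Y : A → ℝ) :
    ‖Y‖ ≤ (∑ a, 1 / Real.sqrt (q a)) * normW q Y := by
  have hN : 0 ≤ normW q Y := Real.sqrt_nonneg _
  have hnn : ∀ a ∈ (Finset.univ : Finset A), 0 ≤ 1 / Real.sqrt (q a) := fun a _ => by positivity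
  refine (pi_norm_le_iff_of_nonneg (mul_nonneg (Finset.sum_nonneg hnn) hN)).2 fun a => ?_
  have hs : 0 < Real.sqrt (q a) := Real.sqrt_pos.2 (hpos a)
  have h1 : Real.sqrt (q a) * |Y a| ≤ normW q Y := by
    rw [← Real.sqrt_sq_eq_abs, ← Real.sqrt_mul (hpos a).le]
    exact Real.sqrt_le_sqrt (Finset.single_le_sum (f := fun a => q a * Y a ^ 2)
      (fun b _ => mul_nonneg (hpos b).le (sq_nonneg _)) (Finset.mem_univ a))
  calc ‖Y a‖ ≤ 1 / Real.sqrt (q a) * normW q Y := by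
        rw [Real.norm_eq_abs, one_div_mul_eq_div, le_div_iff₀ hs, mul_comm]
        exact h1
    _ ≤ _ := mul_le_mul_of_nonneg_right
        (Finset.single_le_sum (f := fun a => 1 / Real.sqrt (q a)) hnn (Finset.mem_univ a)) hN

/-- An injective linear map on a finite-dimensional space is bounded below; here the map is the
residual `X ↦ X - E_q[X | C]` on a subspace `L` with no nonzero function of `C`. -/
lemma exists_bound {A 𝒞 : Type} [Fintype A] {q : A → ℝ} (hq : IsDist q)
    (hpos : ∀ a, 0 < q a) (Cf : A → 𝒞) (L : Submodule ℝ (A → ℝ))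
    (hL : ∀ X ∈ L, (∃ ψ : 𝒞 → ℝ, X = fun a => ψ (Cf a)) → X = 0) :
    ∃ K : ℝ, 0 ≤ K ∧ ∀ X ∈ L,
      normW q (condExpW q Cf X) ≤ K * normW q (X - condExpW q Cf X) := by
  have hker : LinearMap.ker ((condResidual q Cf).domRestrict L) = ⊥ := by
    refine LinearMap.ker_eq_bot'.2 fun X hX => Subtype.ext (hL X X.2 ?_)
    have hX' : (X : A → ℝ) - condExpW q Cf X = 0 := hX
    exact ⟨fun c => (∑ a' ∈ univ.filter (fun a' => Cf a' = c), q a' * (X : A → ℝ) a') /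
      (∑ a' ∈ univ.filter (fun a' => Cf a' = c), q a'), sub_eq_zero.1 hX'⟩
  obtain ⟨K, -, hK⟩ := LinearMap.exists_antilipschitzWith _ hker
  have hM : 0 ≤ ∑ a, 1 / Real.sqrt (q a) := Finset.sum_nonneg fun a _ => by positivity
  refine ⟨(K + 1) * ∑ a, 1 / Real.sqrt (q a), by positivity, fun X hX => ?_⟩
  have h1 : ‖X‖ ≤ K * ‖X - condExpW q Cf X‖ :=
    ZeroHomClass.bound_of_antilipschitz _ hK ⟨X, hX⟩
  have h2 : ‖condExpW q Cf X‖ ≤ ‖X‖ + ‖X - condExpW q Cf X‖ := by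
    simpa using norm_sub_le X (X - condExpW q Cf X)
  calc normW q (condExpW q Cf X) ≤ ‖condExpW q Cf X‖ := normW_le_norm hq _
    _ ≤ (K + 1) * ‖X - condExpW q Cf X‖ := by linarith
    _ ≤ (K + 1) * ((∑ a, 1 / Real.sqrt (q a)) * normW q (X - condExpW q Cf X)) :=
        mul_le_mul_of_nonneg_left (norm_le_normW hpos _) (by positivity)
    _ = _ := by ring

/-- Lemma `lem:Delta-prime`.  Suppose the distributions `p s`
have full support and the only function in `ℒ'_A = ℒ_A ∩ (𝟏_A)^⊥` that factors
through `C` is zero.  Then there is `Δ' > 0` such that for every `s` and every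
`X ∈ ℒ'_A`, writing `X = U + U'` with `U = E_(s)[X | C]`, one has
`‖U'‖_(s) ≥ Δ' ‖U‖_(s)`. -/
theorem stmt_14 {A 𝒞 S : Type} [Fintype A] [Fintype 𝒞] [Fintype S]
    (p : S → A → ℝ) (hp : ∀ s, IsDist (p s)) (hpos : ∀ s a, 0 < p s a)
    (Cf : A → 𝒞)
    (hfac : ∀ X : A → ℝ,
      (∀ s s', expw (p s) X = expw (p s') X) →
      innerStar X (fun _ => 1) = 0 →
      (∃ ψ : 𝒞 → ℝ, X = fun a => ψ (Cf a)) → X = 0) :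
    ∃ Δ' : ℝ, 0 < Δ' ∧ ∀ (s : S) (X : A → ℝ),
      (∀ s₁ s₂, expw (p s₁) X = expw (p s₂) X) →
      innerStar X (fun _ => 1) = 0 →
      Δ' * normW (p s) (condExpW (p s) Cf X) ≤
        normW (p s) (X - condExpW (p s) Cf X) := by
  choose K hK0 hK using fun s => exists_bound (hp s) (hpos s) Cf (commonMean p)
    fun X hX => hfac X hX.1 hX.2
  have hT : 0 < 1 + ∑ s, K s :=
    add_pos_of_pos_of_nonneg one_pos (Finset.sum_nonneg fun s _ => hK0 s)
  refine ⟨1 / (1 + ∑ s, K s), by positivity, fun s X h1 h2 => ?_⟩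
  rw [one_div_mul_eq_div, div_le_iff₀ hT, mul_comm]
  refine (hK s X ⟨h1, h2⟩).trans (mul_le_mul_of_nonneg_right ?_ (Real.sqrt_nonneg _))
  have := Finset.single_le_sum (fun s _ => hK0 s) (Finset.mem_univ s)
  linarith
end

section
/- Consider a generalized SV source with finite alphabet 𝒞, finite index set 𝒮, and distributions p_s. Let ψ : 𝒞 → ℝ satisfy E_{(s)}[ψ] = 0 and Var_{(s)}[ψ] ≥ v for all s ∈ 𝒮, where v > 0, and let m = max_c |ψ(c)|. Fix M > 0 and n, fix any adversary strategy of length n, and let C_1,…,C_n be the resulting random sequence. Define Y_0 = 0 and Y_i = Σ_{j=1}^i ψ(C_j), and let τ be the first index i with |Y_i| ≥ M, with τ = n if no such index exists. Then: (i) (Y_i)_{0 ≤ i ≤ n} is a martingale; (ii) (Y_i² − i·v)_{0 ≤ i ≤ n} is a submartingale; (iii) E[τ] ≤ (M+m)²/v; and (iv) Pr[τ = n] ≤ (M+m)²/(v·n). -/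
/-!
Everything reduces to one averaging principle, `chain_nonneg`: if `g(h, x)` has nonnegative mean
under the conditional law of the `i`-th symbol given each history `h`, then
`E[g(C_0 … C_{i-1}, C_i)] ≥ 0`. It is proved by summing out the last symbol repeatedly.

Taking for `g` the increment of `Y` (or its negative), respectively of `Y² - i v`, cut down to a
single history, gives the martingale and submartingale claims. For the stopping time, the event
`i < τ` is determined by the history before step `i`, so optional stopping is the telescoping identity
`Y_τ² - v τ = ∑_{i < n} 1[i < τ] (2 Y_i ψ(C_i) + ψ(C_i)² - v)`, each of whose terms has nonnegative
mean. Since `|Y_{τ-1}| < M`, one has `|Y_τ| ≤ M + m`, hence `v E[τ] ≤ (M + m)²`; the tail bound is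
Markov's inequality.
-/

open Finset

/-- `Y_i = ∑_{j < i} ψ(C_j)`: the martingale value at time `i` along the sequence `c`. -/
def Ypart {C : Type*} {n : ℕ} (ψ : C → ℝ) (c : Fin n → C) (i : ℕ) : ℝ :=
  ∑ j : Fin n, if j.1 < i then ψ (c j) else 0

/-- The stopping time `τ`: the first time `i` with `|Y_i| ≥ M`, and `n` if no such
time exists. -/
noncomputable def hitTime {C : Type*} {n : ℕ} (ψ : C → ℝ) (M : ℝ) (c : Fin n → C) : ℕ :=
  sInf {i : ℕ | (i ≤ n ∧ M ≤ |Ypart ψ c i|) ∨ i = n}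

/-- Summing over sequences of length `n + 1` is summing over the first `n` symbols and the last
one. -/
lemma sum_snoc {C : Type*} [Fintype C] {n : ℕ} (F : (Fin (n + 1) → C) → ℝ) :
    ∑ c, F c = ∑ c : Fin n → C, ∑ x, F (Fin.snoc (α := fun _ => C) c x) := by
  rw [← (Fin.snocEquiv (fun _ : Fin (n + 1) => C)).sum_comp, Fintype.sum_prod_type,
    Finset.sum_comm]
  rfl

lemma histOf_snoc_castSucc {C : Type*} {n : ℕ} (c : Fin n → C) (x : C) (i : Fin n) :
    histOf (Fin.snoc (α := fun _ => C) c x) i.castSucc = histOf c i := by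
  funext j
  exact Fin.snoc_castSucc (α := fun _ => C) x c ⟨j.1, j.2.trans i.2⟩

lemma histOf_snoc_last {C : Type*} {n : ℕ} (c : Fin n → C) (x : C) :
    histOf (Fin.snoc (α := fun _ => C) c x) (Fin.last n) = c := by
  funext j
  exact Fin.snoc_castSucc (α := fun _ => C) x c j

/-- The law of the sequence whose `i`-th symbol has conditional law `k i h` given the history
`h`. -/
def chainProb {C : Type*} {n : ℕ} (k : (i : Fin n) → (Fin i.1 → C) → C → ℝ) (c : Fin n → C) : ℝ :=
  ∏ i, k i (histOf c i) (c i)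

lemma chainProb_snoc {C : Type*} {n : ℕ} (k : (i : Fin (n + 1)) → (Fin i.1 → C) → C → ℝ)
    (c : Fin n → C) (x : C) :
    chainProb k (Fin.snoc (α := fun _ => C) c x) =
      chainProb (fun i : Fin n => k i.castSucc) c * k (Fin.last n) c x := by
  unfold chainProb
  rw [Fin.prod_univ_castSucc, histOf_snoc_last, Fin.snoc_last]
  congr 1
  refine Finset.prod_congr rfl fun i _ => ?_
  rw [histOf_snoc_castSucc, Fin.snoc_castSucc]

lemma chainProb_nonneg {C : Type*} [Fintype C] {n : ℕ}
    (k : (i : Fin n) → (Fin i.1 → C) → C → ℝ)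
    (hk : ∀ i h, IsDist (k i h)) (c : Fin n → C) : 0 ≤ chainProb k c :=
  Finset.prod_nonneg fun i _ => (hk i _).1 _

lemma chainProb_sum {C : Type*} [Fintype C] {n : ℕ}
    (k : (i : Fin n) → (Fin i.1 → C) → C → ℝ)
    (hk : ∀ i h, IsDist (k i h)) : ∑ c, chainProb k c = 1 := by
  induction n with
  | zero => simp [chainProb]
  | succ n ih =>
    rw [sum_snoc]
    simp_rw [chainProb_snoc, ← Finset.mul_sum]
    rw [← ih (fun i : Fin n => k i.castSucc) (fun i h => hk i.castSucc h)]
    refine Finset.sum_congr rfl fun c _ => ?_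
    rw [(hk (Fin.last n) c).2, mul_one]

/-- A function of the history before step `i` and of the `i`-th symbol has nonnegative expectation
if it has nonnegative conditional expectation given every history. -/
lemma chain_nonneg {C : Type*} [Fintype C] {n : ℕ}
    (k : (i : Fin n) → (Fin i.1 → C) → C → ℝ)
    (hk : ∀ i h, IsDist (k i h)) (i : Fin n) (g : (Fin i.1 → C) → C → ℝ)
    (hg : ∀ h, 0 ≤ ∑ x, k i h x * g h x) :
    0 ≤ ∑ c, chainProb k c * g (histOf c i) (c i) := by
  induction n with
  | zero => exact i.elim0
  | succ n ih =>
    rw [sum_snoc]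
    simp_rw [chainProb_snoc]
    induction i using Fin.lastCases with
    | last =>
      refine Finset.sum_nonneg fun c _ => ?_
      simp_rw [histOf_snoc_last, Fin.snoc_last, mul_assoc, ← Finset.mul_sum]
      exact mul_nonneg (chainProb_nonneg (fun i : Fin n => k i.castSucc)
        (fun i h => hk i.castSucc h) c) (hg c)
    | cast i =>
      have h0 := ih (fun i : Fin n => k i.castSucc) (fun i h => hk i.castSucc h) i g hg
      refine h0.trans_eq (Finset.sum_congr rfl fun c _ => ?_)
      simp_rw [histOf_snoc_castSucc, Fin.snoc_castSucc]
      rw [← Finset.sum_mul, ← Finset.mul_sum, (hk (Fin.last n) c).2, mul_one]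

lemma Ypart_zero {C : Type*} {n : ℕ} (ψ : C → ℝ) (c : Fin n → C) : Ypart ψ c 0 = 0 := by
  simp [Ypart]

lemma Ypart_succ {C : Type*} {n : ℕ} (ψ : C → ℝ) (c : Fin n → C) (i : Fin n) :
    Ypart ψ c (i.1 + 1) = Ypart ψ c i.1 + ψ (c i) := by
  have h : ψ (c i) = ∑ j : Fin n, if j = i then ψ (c j) else 0 := by simp
  unfold Ypart
  rw [h, ← Finset.sum_add_distrib]
  refine Finset.sum_congr rfl fun j _ => ?_
  rcases lt_trichotomy j i with hj | hj | hj
  · have h1 : j.1 < i.1 := hj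
    simp [h1, hj.ne, h1.trans (Nat.lt_succ_self _)]
  · simp [hj]
  · have h1 : i.1 < j.1 := hj
    simp [hj.ne', show ¬ j.1 < i.1 by omega, show ¬ j.1 < i.1 + 1 by omega]

/-- `Y_j` is determined by the history before step `i` when `j ≤ i`. -/
lemma Ypart_histOf {C : Type*} {n : ℕ} (ψ : C → ℝ) (c : Fin n → C) (i : Fin n) (j : ℕ)
    (hj : j ≤ i.1) : Ypart ψ (histOf c i) j = Ypart ψ c j := by
  induction j with
  | zero => rw [Ypart_zero, Ypart_zero]
  | succ j ih =>
    have h1 := Ypart_succ ψ (histOf c i) ⟨j, hj⟩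
    have h2 := Ypart_succ ψ c ⟨j, lt_of_lt_of_le hj i.2.le⟩
    simp only at h1 h2
    rw [h1, h2, ih (by omega)]
    rfl

lemma hitTime_le {C : Type*} {n : ℕ} (ψ : C → ℝ) (M : ℝ) (c : Fin n → C) : hitTime ψ M c ≤ n :=
  Nat.sInf_le (Or.inr rfl)

lemma abs_Ypart_lt {C : Type*} {n : ℕ} (ψ : C → ℝ) (M : ℝ) (c : Fin n → C) {j : ℕ}
    (hj : j < hitTime ψ M c) : |Ypart ψ c j| < M := by
  by_contra! h
  exact Nat.notMem_of_lt_sInf hj (Or.inl ⟨hj.le.trans (hitTime_le ψ M c), h⟩)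

lemma lt_hitTime_iff {C : Type*} {n : ℕ} (ψ : C → ℝ) (M : ℝ) (c : Fin n → C) (i : Fin n) :
    i.1 < hitTime ψ M c ↔ ∀ j ≤ i.1, |Ypart ψ c j| < M := by
  constructor
  · intro h j hj
    exact abs_Ypart_lt ψ M c (hj.trans_lt h)
  · intro h
    by_contra! hle
    have hmem : hitTime ψ M c ∈ {i : ℕ | (i ≤ n ∧ M ≤ |Ypart ψ c i|) ∨ i = n} :=
      Nat.sInf_mem ⟨n, Or.inr rfl⟩
    rcases hmem with ⟨_, h2⟩ | h2
    · exact absurd (h _ hle) (not_lt.mpr h2)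
    · have := i.2
      omega

/-- The event that `τ` exceeds the current time is determined by the history. -/
lemma lt_hitTime_iff_histOf {C : Type*} {n : ℕ} (ψ : C → ℝ) (M : ℝ) (c : Fin n → C)
    (i : Fin n) :
    i.1 < hitTime ψ M c ↔ ∀ j ≤ i.1, |Ypart ψ (histOf c i) j| < M := by
  rw [lt_hitTime_iff]
  refine forall₂_congr fun j hj => ?_
  rw [Ypart_histOf ψ c i j hj]

/-- Telescoping form of `Y_t² - v t`. -/
lemma sq_sub_eq_sum {C : Type*} {n : ℕ} (ψ : C → ℝ) (v : ℝ) (c : Fin n → C) (t : ℕ)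
    (ht : t ≤ n) :
    Ypart ψ c t ^ 2 - v * t =
      ∑ i : Fin n, if i.1 < t then 2 * Ypart ψ c i.1 * ψ (c i) + ψ (c i) ^ 2 - v else 0 := by
  induction t with
  | zero => simp [Ypart_zero]
  | succ t ih =>
    -- The truncated sum is `Ypart f id` over the alphabet `Fin n`, so `Ypart_succ` splits it.
    have hsplit : ∀ f : Fin n → ℝ, (∑ i : Fin n, if i.1 < t + 1 then f i else 0) =
        (∑ i : Fin n, if i.1 < t then f i else 0) + f ⟨t, ht⟩ := fun f =>
      Ypart_succ f id ⟨t, ht⟩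
    have hY := Ypart_succ ψ c ⟨t, ht⟩
    simp only at hY
    rw [hsplit, ← ih (by omega), hY]
    push_cast
    ring

lemma abs_Ypart_hitTime_le {C : Type*} {n : ℕ} (ψ : C → ℝ) (M m : ℝ) (hM : 0 < M)
    (hm : 0 ≤ m) (hψ : ∀ x, |ψ x| ≤ m) (c : Fin n → C) :
    |Ypart ψ c (hitTime ψ M c)| ≤ M + m := by
  have hle := hitTime_le ψ M c
  rcases Nat.eq_zero_or_eq_succ_pred (hitTime ψ M c) with h | h
  · rw [h, Ypart_zero, abs_zero]
    positivity
  · set t := (hitTime ψ M c).pred with ht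
    have hlt : t < hitTime ψ M c := by omega
    have hY := Ypart_succ ψ c ⟨t, by omega⟩
    simp only at hY
    rw [h, Nat.succ_eq_add_one, hY]
    exact (abs_add_le _ _).trans (add_le_add (abs_Ypart_lt ψ M c hlt).le (hψ _))

/-- The conditional law of the next symbol when the die is drawn from the mixture `w`. -/
def mixLaw {C S : Type*} [Fintype S] (p : S → C → ℝ) (w : S → ℝ) (x : C) : ℝ :=
  ∑ s, w s * p s x

lemma mixLaw_sum {C S : Type*} [Fintype C] [Fintype S] (p : S → C → ℝ) (w : S → ℝ)
    (f : C → ℝ) : ∑ x, mixLaw p w x * f x = ∑ s, w s * ∑ x, p s x * f x := by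
  simp_rw [mixLaw, Finset.sum_mul, Finset.mul_sum, mul_assoc]
  exact Finset.sum_comm

lemma mixLaw_isDist {C S : Type*} [Fintype C] [Fintype S] {p : S → C → ℝ}
    (hp : ∀ s, IsDist (p s)) {w : S → ℝ} (hw : IsDist w) : IsDist (mixLaw p w) := by
  refine ⟨fun x => Finset.sum_nonneg fun s _ => mul_nonneg (hw.1 s) ((hp s).1 x), ?_⟩
  have h := mixLaw_sum p w fun _ => 1
  simp only [mul_one, (hp _).2, hw.2] at h
  exact h

/-- Given the history, the increment `2 y ψ(x) + ψ(x)² - v` of `Y² - i v` from the value `Y = y`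
has nonnegative mean. -/
lemma mixLaw_sq_increment_nonneg {C S : Type*} [Fintype C] [Fintype S] {p : S → C → ℝ}
    (hp : ∀ s, IsDist (p s)) {ψ : C → ℝ} {v : ℝ}
    (hmean : ∀ s, (∑ c, p s c * ψ c) = 0)
    (hvar : ∀ s, v ≤ (∑ c, p s c * ψ c ^ 2) - (∑ c, p s c * ψ c) ^ 2)
    {w : S → ℝ} (hw : IsDist w) (y : ℝ) :
    0 ≤ ∑ x, mixLaw p w x * (2 * y * ψ x + ψ x ^ 2 - v) := by
  rw [mixLaw_sum]
  refine Finset.sum_nonneg fun s _ => mul_nonneg (hw.1 s) ?_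
  have h : ∑ x, p s x * (2 * y * ψ x + ψ x ^ 2 - v) =
      2 * y * (∑ x, p s x * ψ x) + (∑ x, p s x * ψ x ^ 2) - (∑ x, p s x) * v := by
    rw [Finset.mul_sum, Finset.sum_mul, ← Finset.sum_add_distrib, ← Finset.sum_sub_distrib]
    exact Finset.sum_congr rfl fun x _ => by ring
  have h2 := hvar s
  rw [hmean s] at h2
  rw [h, hmean s, (hp s).2]
  linarith

/-- Under any adversary strategy for a generalized SV source, if
`E_(s)[ψ] = 0` and `Var_(s)[ψ] ≥ v > 0` for all `s`, then with `Y_i = ∑_{j≤i} ψ(C_j)`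
and `m = max_c |ψ(c)|`:
(i) `(Y_i)` is a martingale (w.r.t. the natural filtration, expressed atom-wise);
(ii) `(Y_i² − i·v)` is a submartingale;
(iii) `E[τ] ≤ (M+m)²/v`; and (iv) `Pr[τ = n] ≤ (M+m)²/(v·n)`. -/
theorem stmt_15 {C S : Type} [Fintype C] [DecidableEq C] [Fintype S] [Nonempty C]
    (p : S → C → ℝ) (hp : ∀ s, IsDist (p s))
    (ψ : C → ℝ) (v : ℝ) (hv : 0 < v)
    (hmean : ∀ s, (∑ c, p s c * ψ c) = 0)
    (hvar : ∀ s, v ≤ (∑ c, p s c * ψ c ^ 2) - (∑ c, p s c * ψ c) ^ 2)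
    (m : ℝ) (hm : m = univ.sup' univ_nonempty fun c => |ψ c|)
    (M : ℝ) (hM : 0 < M)
    (n : ℕ) (hn : 0 < n)
    (q : (i : Fin n) → (Fin i.1 → C) → S → ℝ) (hq : IsStrategy q) :
    (∀ (i : Fin n) (h : Fin i.1 → C),
      (∑ c ∈ univ.filter (fun c => histOf c i = h),
        seqProb p q c * Ypart ψ c (i.1 + 1)) =
      (∑ c ∈ univ.filter (fun c => histOf c i = h),
        seqProb p q c * Ypart ψ c i.1)) ∧
    (∀ (i : Fin n) (h : Fin i.1 → C),
      (∑ c ∈ univ.filter (fun c => histOf c i = h),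
        seqProb p q c * (Ypart ψ c i.1 ^ 2 - i.1 * v)) ≤
      (∑ c ∈ univ.filter (fun c => histOf c i = h),
        seqProb p q c * (Ypart ψ c (i.1 + 1) ^ 2 - (i.1 + 1) * v))) ∧
    (∑ c : Fin n → C, seqProb p q c * (hitTime ψ M c : ℝ)) ≤ (M + m) ^ 2 / v ∧
    (∑ c ∈ univ.filter (fun c => hitTime ψ M c = n), seqProb p q c) ≤
      (M + m) ^ 2 / (v * n) := by
  classical
  set k : (i : Fin n) → (Fin i.1 → C) → C → ℝ := fun i h => mixLaw p (q i h) with hkdef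
  have hk : ∀ i h, IsDist (k i h) := fun i h => mixLaw_isDist hp (hq i h)
  have hP : ∀ c, seqProb p q c = chainProb k c := fun c => rfl
  simp_rw [hP]
  have hψ : ∀ x, |ψ x| ≤ m := fun x => by
    rw [hm]
    exact Finset.le_sup' (fun c => |ψ c|) (Finset.mem_univ x)
  have hm0 : 0 ≤ m := (abs_nonneg _).trans (hψ (Classical.arbitrary C))
  have hmix : ∀ (i : Fin n) (h : Fin i.1 → C), ∑ x, k i h x * ψ x = 0 := fun i h => by
    simp only [hkdef, mixLaw_sum, hmean, mul_zero, Finset.sum_const_zero]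
  have hsq : ∀ (i : Fin n) (h : Fin i.1 → C) (y : ℝ),
      0 ≤ ∑ x, k i h x * (2 * y * ψ x + ψ x ^ 2 - v) := fun i h y =>
    mixLaw_sq_increment_nonneg hp hmean hvar (hq i h) y
  -- The averaging principle, restricted to sequences with a given history.
  have hatom : ∀ (i : Fin n) (h : Fin i.1 → C) (f : C → ℝ), 0 ≤ ∑ x, k i h x * f x →
      0 ≤ ∑ c ∈ univ.filter (fun c => histOf c i = h), chainProb k c * f (c i) := by
    intro i h f hf
    have h0 := chain_nonneg k hk i (fun hist x => if hist = h then f x else 0) (by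
      intro hist
      by_cases hh : hist = h
      · subst hh
        simpa using hf
      · simp [hh])
    rw [Finset.sum_filter]
    refine h0.trans_eq (Finset.sum_congr rfl fun c _ => ?_)
    split_ifs <;> simp
  have htau : (∑ c : Fin n → C, chainProb k c * (hitTime ψ M c : ℝ)) ≤ (M + m) ^ 2 / v := by
    have hstep : 0 ≤ ∑ c : Fin n → C, chainProb k c *
        (Ypart ψ c (hitTime ψ M c) ^ 2 - v * (hitTime ψ M c : ℝ)) := by
      simp_rw [fun c : Fin n → C => sq_sub_eq_sum ψ v c _ (hitTime_le ψ M c), Finset.mul_sum]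
      rw [Finset.sum_comm]
      refine Finset.sum_nonneg fun i _ => ?_
      have h0 := chain_nonneg k hk i (fun h x =>
        if ∀ j ≤ i.1, |Ypart ψ h j| < M then
          2 * Ypart ψ h i.1 * ψ x + ψ x ^ 2 - v else 0) (by
        intro h
        by_cases hh : ∀ j ≤ i.1, |Ypart ψ h j| < M
        · simp only [if_pos hh]
          exact hsq i h _
        · simp only [if_neg hh, mul_zero, Finset.sum_const_zero, le_refl])
      refine h0.trans_eq (Finset.sum_congr rfl fun c _ => ?_)
      simp only [← lt_hitTime_iff_histOf, Ypart_histOf ψ c i i.1 le_rfl]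
    have hle : ∑ c : Fin n → C, chainProb k c *
        (Ypart ψ c (hitTime ψ M c) ^ 2 - v * (hitTime ψ M c : ℝ)) ≤
        ∑ c : Fin n → C, (chainProb k c * (M + m) ^ 2 -
          chainProb k c * (hitTime ψ M c : ℝ) * v) := by
      refine Finset.sum_le_sum fun c _ => ?_
      have h1 : Ypart ψ c (hitTime ψ M c) ^ 2 ≤ (M + m) ^ 2 :=
        sq_le_sq.mpr ((abs_Ypart_hitTime_le ψ M m hM hm0 hψ c).trans (le_abs_self _))
      have h2 := mul_le_mul_of_nonneg_left h1 (chainProb_nonneg k hk c)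
      linarith
    rw [Finset.sum_sub_distrib, ← Finset.sum_mul, ← Finset.sum_mul, chainProb_sum k hk] at hle
    rw [le_div_iff₀ hv]
    linarith
  refine ⟨fun i h => ?_, fun i h => ?_, htau, ?_⟩
  · have h1 := hatom i h ψ (hmix i h).ge
    have h2 := hatom i h (fun x => -ψ x) (by simp [hmix i h])
    simp only [mul_neg, Finset.sum_neg_distrib] at h2
    simp_rw [Ypart_succ, mul_add, Finset.sum_add_distrib]
    linarith
  · have h1 := hatom i h (fun x => 2 * Ypart ψ h i.1 * ψ x + ψ x ^ 2 - v) (hsq i h _)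
    rw [← sub_nonneg, ← Finset.sum_sub_distrib]
    refine h1.trans_eq (Finset.sum_congr rfl fun c hc => ?_)
    rw [← (Finset.mem_filter.mp hc).2, Ypart_histOf ψ c i i.1 le_rfl, Ypart_succ]
    ring
  · have hnpos : (0 : ℝ) < n := by exact_mod_cast hn
    rw [← div_div, le_div_iff₀ hnpos, Finset.sum_mul]
    refine le_trans ?_ htau
    rw [Finset.sum_filter]
    refine Finset.sum_le_sum fun c _ => ?_
    split_ifs with hc
    · rw [hc]
    · exact mul_nonneg (chainProb_nonneg k hk c) (Nat.cast_nonneg _)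
end

section
/- Let 𝒞 be a finite alphabet, 𝒮 a finite index set, and p_s probability distributions on 𝒞 such that there is no non-zero function ψ : 𝒞 → ℝ with E_{(s)}[ψ] = 0 for all s ∈ 𝒮. Let f : [0,1] → ℝ be continuously differentiable with f(0) = f(1) = 0 and f(1/2) > 0. Then there exists ε_0 > 0 such that for every 0 < ε < ε_0, the function g_ε(x) = x + ε f(x) satisfies: g_ε is monotone increasing on [0,1]; g_ε(0) = 0, g_ε(1) = 1, g_ε(1/2) > 1/2; and for every function X : 𝒞 → [0,1], max_{s, s′ ∈ 𝒮} ( E_{(s)}[g_ε ∘ X] − g_ε( E_{(s′)}[X] ) ) ≥ 0. -/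
/-! The function `f` is Lipschitz on `[0,1]`, with constant `K` say. Let `s` maximise and
`s'` minimise `E_(s)[X]`, and let `m`, `M` be the minimum and the maximum. The quantity of interest for the pair
`(s, s')` is `(M - m) + ε * (E_(s)[f ∘ X] - f m)`, and the second summand is at least
`-ε * K * max |X - m|`. Since `ψ ↦ (E_(s)[ψ])_s` is an injective linear map between
finite-dimensional spaces, it is bounded below: `max |ψ| ≤ L * max_s |E_(s)[ψ]|`
(`exists_norm_bound`). Taking `ψ = X - m`, whose expectations lie in `[0, M - m]`, gives
`max |X - m| ≤ L * (M - m)`, so the quantity is nonnegative as soon as `ε * K * L ≤ 1`. -/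

open Finset

/-- A family of weights that separates functions on a finite set controls the sup norm. -/
lemma exists_norm_bound {C S : Type} [Fintype C] [Fintype S] (p : S → C → ℝ)
    (hψ : ∀ ψ : C → ℝ, (∀ s, (∑ c, p s c * ψ c) = 0) → ψ = 0) :
    ∃ L : ℝ, 0 ≤ L ∧ ∀ (ψ : C → ℝ) (d : ℝ), 0 ≤ d → (∀ s, |∑ c, p s c * ψ c| ≤ d) →
      ∀ c, |ψ c| ≤ L * d := by
  have hker : LinearMap.ker (Matrix.mulVecLin (Matrix.of p)) = ⊥ := by
    rw [LinearMap.ker_eq_bot']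
    intro ψ h
    exact hψ ψ fun s => congrFun h s
  obtain ⟨L, -, hL⟩ := LinearMap.exists_antilipschitzWith _ hker
  refine ⟨L, L.2, fun ψ d hd h c => ?_⟩
  have h1 := hL.le_mul_dist ψ 0
  rw [map_zero, dist_zero_right, dist_zero_right] at h1
  have h2 : ‖Matrix.mulVecLin (Matrix.of p) ψ‖ ≤ d :=
    (pi_norm_le_iff_of_nonneg hd).2 fun s => h s
  exact (norm_le_pi_norm ψ c).trans (h1.trans (mul_le_mul_of_nonneg_left h2 L.2))

/-- Suppose no non-zero `ψ : 𝒞 → ℝ` has `E_(s)[ψ] = 0` for all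
`s`, and let `f` be continuously differentiable on `[0,1]` with `f(0) = f(1) = 0`
and `f(1/2) > 0`.  Then for all sufficiently small `ε > 0`, the function
`g_ε(x) = x + ε f(x)` is monotone on `[0,1]`, satisfies `g_ε(0) = 0`, `g_ε(1) = 1`,
`g_ε(1/2) > 1/2`, and for every `X : 𝒞 → [0,1]`,
`max_{s,s'} ( E_(s)[g_ε ∘ X] − g_ε(E_(s')[X]) ) ≥ 0`. -/
theorem stmt_18 {C S : Type} [Fintype C] [Fintype S] [Nonempty S]
    (p : S → C → ℝ) (hp : ∀ s, IsDist (p s))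
    (hψ : ∀ ψ : C → ℝ, (∀ s, (∑ c, p s c * ψ c) = 0) → ψ = 0)
    (f : ℝ → ℝ) (hf : ContDiffOn ℝ 1 f (Set.Icc 0 1))
    (hf0 : f 0 = 0) (hf1 : f 1 = 0) (hfhalf : 0 < f (1 / 2)) :
    ∃ ε₀ : ℝ, 0 < ε₀ ∧ ∀ ε : ℝ, 0 < ε → ε < ε₀ →
      MonotoneOn (fun x => x + ε * f x) (Set.Icc (0 : ℝ) 1) ∧
      (0 : ℝ) + ε * f 0 = 0 ∧
      (1 : ℝ) + ε * f 1 = 1 ∧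
      (1 : ℝ) / 2 < 1 / 2 + ε * f (1 / 2) ∧
      ∀ X : C → ℝ, (∀ c, X c ∈ Set.Icc (0 : ℝ) 1) →
        ∃ s s' : S, 0 ≤ (∑ c, p s c * (X c + ε * f (X c))) -
          ((∑ c, p s' c * X c) + ε * f (∑ c, p s' c * X c)) := by
  obtain ⟨K, hK⟩ := hf.exists_lipschitzOnWith one_ne_zero (convex_Icc 0 1) isCompact_Icc
  obtain ⟨L, hL0, hL⟩ := exists_norm_bound p hψ
  have hK0 : (0 : ℝ) ≤ K := K.2
  have hlip : ∀ x ∈ Set.Icc (0 : ℝ) 1, ∀ y ∈ Set.Icc (0 : ℝ) 1, |f x - f y| ≤ K * |x - y| :=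
    fun x hx y hy => hK.dist_le_mul x hx y hy
  have hKL : 0 ≤ (K : ℝ) * L := mul_nonneg hK0 hL0
  -- This threshold makes both `ε * K ≤ 1` (monotonicity) and `ε * (K * L) ≤ 1` hold.
  refine ⟨1 / (K * L + K + 1), by positivity, fun ε hε hε' => ?_⟩
  rw [lt_div_iff₀ (by positivity)] at hε'
  have hεK : ε * K ≤ 1 := by nlinarith [mul_nonneg hε.le hKL]
  have hεKL : ε * (K * L) ≤ 1 := by nlinarith [mul_nonneg hε.le hK0]
  refine ⟨?_, by simp [hf0], by simp [hf1], by nlinarith [mul_pos hε hfhalf], ?_⟩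
  · intro x hx y hy hxy
    have h1 := hlip x hx y hy
    rw [abs_sub_comm x y, abs_of_nonneg (sub_nonneg.2 hxy)] at h1
    have h2 := mul_le_mul_of_nonneg_left ((le_abs_self _).trans h1) hε.le
    have h3 := mul_le_mul_of_nonneg_right hεK (sub_nonneg.2 hxy)
    simp only
    linarith
  · intro X hX
    obtain ⟨s, hs⟩ := Finite.exists_max fun s => ∑ c, p s c * X c
    obtain ⟨s', hs'⟩ := Finite.exists_min fun s => ∑ c, p s c * X c
    refine ⟨s, s', ?_⟩
    set M := ∑ c, p s c * X c with hM
    set m := ∑ c, p s' c * X c with hm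
    have hm01 : m ∈ Set.Icc (0 : ℝ) 1 := by
      refine ⟨sum_nonneg fun c _ => mul_nonneg ((hp s').1 c) (hX c).1, ?_⟩
      rw [← (hp s').2]
      exact sum_le_sum fun c _ => mul_le_of_le_one_right ((hp s').1 c) (hX c).2
    have hshift : ∀ t, ∑ c, p t c * (X c - m) = (∑ c, p t c * X c) - m := fun t => by
      simp only [mul_sub, sum_sub_distrib, ← sum_mul, (hp t).2, one_mul]
    have hD : ∀ c, |X c - m| ≤ L * (M - m) := by
      refine hL (fun c => X c - m) (M - m) (sub_nonneg.2 (hs' s)) fun t => ?_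
      rw [hshift, abs_of_nonneg (sub_nonneg.2 (hs' t))]
      exact sub_le_sub_right (hs t) m
    have hE : f m - K * (L * (M - m)) ≤ ∑ c, p s c * f (X c) := by
      calc f m - K * (L * (M - m)) = ∑ c, p s c * (f m - K * (L * (M - m))) := by
            rw [← sum_mul, (hp s).2, one_mul]
        _ ≤ _ := by
            refine sum_le_sum fun c _ => mul_le_mul_of_nonneg_left ?_ ((hp s).1 c)
            have h1 := (abs_le.1 (hlip _ (hX c) m hm01)).1
            have h2 := mul_le_mul_of_nonneg_left (hD c) hK0
            linarith
    have hsplit : ∑ c, p s c * (X c + ε * f (X c)) = M + ε * ∑ c, p s c * f (X c) := by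
      rw [hM, mul_sum, ← sum_add_distrib]
      exact sum_congr rfl fun c _ => by ring
    rw [hsplit]
    have h1 := mul_le_mul_of_nonneg_left hE hε.le
    have h2 := mul_le_mul_of_nonneg_right hεKL (sub_nonneg.2 (hs' s))
    linarith
end
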